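/- arXiv:1603.06904 — 7 statements merged into one kernel-verified Lean document; each statement's English description precedes it below -/
import Mathlib

section
/- Let λ, q, c > 0, σ ≥ 0 and r ∈ (0,1], and let f be a probability density on (0,∞) (f : ℝ → ℝ measurable, nonnegative, vanishing on (−∞,0], with ∫_0^∞ f(x) dx = 1). Then the generalized Lundberg equation (σ²/2)s² + c s − (λ + q) + λ r f̂(s) = 0 has exactly one root s in [0,∞), and this root is strictly positive. -/
open MeasureTheory

/-- Laplace transform of a function vanishing on `(-∞, 0]`. -/
noncomputable def laplace (f : ℝ → ℝ) (s : ℝ) : ℝ :=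
  ∫ x in Set.Ioi (0 : ℝ), Real.exp (-s * x) * f x

/-!
The left-hand side of the Lundberg equation is convex and continuous in `s` on `[0, ∞)`, because
each `s ↦ exp (-s x)` is. It is negative at `0` and tends to `∞`, so it has a root. A convex
function is strictly increasing from any point at which it exceeds its initial value, so there is
no second root.
-/

open Set Filter

theorem exists_unique_eq_of_convexOn_Ici {g : ℝ → ℝ} {a y : ℝ} (hconv : ConvexOn ℝ (Ici a) g)
    (hcont : ContinuousOn g (Ici a)) (htop : Tendsto g atTop atTop) (hy : g a < y) :
    ∃ x, a < x ∧ g x = y ∧ ∀ x', a ≤ x' → g x' = y → x' = x := by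
  have lt_of_eq {x : ℝ} (hx : a ≤ x) (hgx : g x = y) : a < x :=
    hx.lt_of_ne (by rintro rfl; exact hy.ne hgx)
  have hmono : StrictMonoOn g {x | a < x ∧ g a < g x} := fun u hu v hv huv =>
    hconv.strictMonoOn self_mem_Ici hu.1 hu.2 ⟨hu.1.le, self_mem_Ici⟩ ⟨hv.1.le, huv.le⟩ huv
  obtain ⟨x, hx, hgx⟩ := intermediate_value_Ici hcont htop hy.le
  refine ⟨x, lt_of_eq hx hgx, hgx, fun x' hx' hgx' => ?_⟩
  exact hmono.injOn ⟨lt_of_eq hx' hgx', hgx' ▸ hy⟩ ⟨lt_of_eq hx hgx, hgx ▸ hy⟩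
    (hgx'.trans hgx.symm)

theorem convexOn_exp_neg_mul (x : ℝ) : ConvexOn ℝ univ fun s : ℝ => Real.exp (-s * x) := by
  simpa [Function.comp_def] using! convexOn_exp.comp_linearMap (LinearMap.mulRight ℝ (-x))

theorem norm_exp_neg_mul_mul_le {s x : ℝ} (hs : 0 ≤ s) (hx : 0 ≤ x) (y : ℝ) :
    ‖Real.exp (-s * x) * y‖ ≤ ‖y‖ := by
  have hexp : Real.exp (-s * x) ≤ 1 :=
    Real.exp_le_one_iff.mpr (mul_nonpos_of_nonpos_of_nonneg (neg_nonpos.mpr hs) hx)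
  rw [norm_mul, Real.norm_eq_abs, Real.abs_exp]
  exact mul_le_of_le_one_left (norm_nonneg y) hexp

section Laplace

variable {f : ℝ → ℝ}

theorem ae_norm_laplace_integrand_le {s : ℝ} (hs : 0 ≤ s) (f : ℝ → ℝ) :
    ∀ᵐ x ∂volume.restrict (Ioi 0), ‖Real.exp (-s * x) * f x‖ ≤ ‖f x‖ :=
  ae_restrict_of_forall_mem measurableSet_Ioi fun x hx =>
    norm_exp_neg_mul_mul_le hs (le_of_lt hx) (f x)

theorem integrableOn_laplace_integrand (hf : IntegrableOn f (Ioi 0)) {s : ℝ} (hs : 0 ≤ s) :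
    IntegrableOn (fun x => Real.exp (-s * x) * f x) (Ioi 0) :=
  Integrable.mono hf (by have := hf.aestronglyMeasurable; fun_prop)
    (ae_norm_laplace_integrand_le hs f)

theorem laplace_zero (f : ℝ → ℝ) : laplace f 0 = ∫ x in Ioi (0 : ℝ), f x := by
  simp [laplace]

theorem laplace_nonneg (hf : 0 ≤ᵐ[volume.restrict (Ioi 0)] f) (s : ℝ) : 0 ≤ laplace f s :=
  integral_nonneg_of_ae <| hf.mono fun _ hx => mul_nonneg (Real.exp_nonneg _) hx

theorem continuousOn_laplace (hf : IntegrableOn f (Ioi 0)) : ContinuousOn (laplace f) (Ici 0) :=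
  continuousOn_of_dominated
    (fun _ hs => (integrableOn_laplace_integrand hf hs).aestronglyMeasurable)
    (fun _ hs => ae_norm_laplace_integrand_le hs f) hf.norm (.of_forall fun _ => by fun_prop)

theorem convexOn_laplace (hf : IntegrableOn f (Ioi 0))
    (hf_nonneg : 0 ≤ᵐ[volume.restrict (Ioi 0)] f) : ConvexOn ℝ (Ici 0) (laplace f) := by
  refine integral_convexOn_of_integrand_ae (convex_Ici 0) ?_
    fun _ hs => integrableOn_laplace_integrand hf hs
  filter_upwards [hf_nonneg] with x hx
  simpa only [smul_eq_mul, mul_comm] using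
    ((convexOn_exp_neg_mul x).smul hx).subset (subset_univ _) (convex_Ici 0)

end Laplace

section Quadratic

variable {𝕜 : Type*} [Field 𝕜] [LinearOrder 𝕜] [IsStrictOrderedRing 𝕜] {a : 𝕜}

theorem convexOn_quadratic (ha : 0 ≤ a) (b d : 𝕜) :
    ConvexOn 𝕜 univ fun s : 𝕜 => a * s ^ 2 + b * s - d := by
  simp only [sub_eq_add_neg]
  exact ((even_two.convexOn_pow.smul ha).add
    ((LinearMap.mulLeft 𝕜 b).convexOn convex_univ)).add_const (-d)

theorem tendsto_quadratic_atTop {b : 𝕜} (ha : 0 ≤ a) (h : a ≠ 0 ∨ 0 < b) (d : 𝕜) :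
    Tendsto (fun s : 𝕜 => a * s ^ 2 + b * s - d) atTop atTop := by
  simp only [sub_eq_add_neg]
  refine tendsto_atTop_add_const_right _ (-d) ?_
  rcases ha.eq_or_lt with rfl | ha
  · simpa using tendsto_id.const_mul_atTop (h.resolve_left (· rfl))
  · have hlin : Tendsto (fun s => a * s + b) atTop atTop :=
      tendsto_atTop_add_const_right _ b (tendsto_id.const_mul_atTop ha)
    exact (tendsto_id.atTop_mul_atTop₀ hlin).congr fun s => by simp only [id]; ring

end Quadratic

/-- The left-hand side of the generalized Lundberg equation, as a function of `s`. -/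
noncomputable def lundbergFunction (lam q c σ r : ℝ) (f : ℝ → ℝ) (s : ℝ) : ℝ :=
  σ ^ 2 / 2 * s ^ 2 + c * s - (lam + q) + lam * r * laplace f s

section Lundberg

variable {lam q c σ r : ℝ} {f : ℝ → ℝ}

theorem continuousOn_lundbergFunction (hf : IntegrableOn f (Ioi 0)) :
    ContinuousOn (lundbergFunction lam q c σ r f) (Ici 0) := by
  have := continuousOn_laplace hf
  unfold lundbergFunction
  fun_prop

theorem convexOn_lundbergFunction (hlr : 0 ≤ lam * r) (hf : IntegrableOn f (Ioi 0))
    (hf_nonneg : 0 ≤ᵐ[volume.restrict (Ioi 0)] f) :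
    ConvexOn ℝ (Ici 0) (lundbergFunction lam q c σ r f) :=
  ((convexOn_quadratic (by positivity) c (lam + q)).subset (subset_univ _) (convex_Ici 0)).add
    ((convexOn_laplace hf hf_nonneg).smul hlr)

theorem tendsto_lundbergFunction_atTop (hσc : σ ≠ 0 ∨ 0 < c) (hlr : 0 ≤ lam * r)
    (hf_nonneg : 0 ≤ᵐ[volume.restrict (Ioi 0)] f) :
    Tendsto (lundbergFunction lam q c σ r f) atTop atTop :=
  tendsto_atTop_mono (fun s => le_add_of_nonneg_right (mul_nonneg hlr (laplace_nonneg hf_nonneg s)))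
    (tendsto_quadratic_atTop (by positivity) (hσc.imp_left fun hσ => by positivity) (lam + q))

theorem lundbergFunction_zero_neg (hmass : lam * r * (∫ x in Ioi (0 : ℝ), f x) < lam + q) :
    lundbergFunction lam q c σ r f 0 < 0 := by
  simp only [lundbergFunction, laplace_zero]
  linarith

theorem lundberg_unique_positive_root_general (hσc : σ ≠ 0 ∨ 0 < c) (hlr : 0 ≤ lam * r)
    (hf : IntegrableOn f (Ioi 0)) (hf_nonneg : 0 ≤ᵐ[volume.restrict (Ioi 0)] f)
    (hmass : lam * r * (∫ x in Ioi (0 : ℝ), f x) < lam + q) :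
    ∃ s, 0 < s ∧ lundbergFunction lam q c σ r f s = 0 ∧
      ∀ s', 0 ≤ s' → lundbergFunction lam q c σ r f s' = 0 → s' = s :=
  exists_unique_eq_of_convexOn_Ici (convexOn_lundbergFunction hlr hf hf_nonneg)
    (continuousOn_lundbergFunction hf) (tendsto_lundbergFunction_atTop hσc hlr hf_nonneg)
    (lundbergFunction_zero_neg hmass)

end Lundberg

/-- The generalized Lundberg equation has exactly one root in `[0, ∞)`,
and this root is strictly positive. -/
theorem lundberg_unique_positive_root
    (lam q c σ r : ℝ) (hlam : 0 < lam) (hq : 0 < q) (hc : 0 < c)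
    (hσ : 0 ≤ σ) (hr : r ∈ Set.Ioc (0 : ℝ) 1)
    (f : ℝ → ℝ) (hf_meas : Measurable f) (hf_nonneg : ∀ x, 0 ≤ f x)
    (hf_zero : ∀ x ≤ 0, f x = 0)
    (hf_int : IntegrableOn f (Set.Ioi 0))
    (hf_one : ∫ x in Set.Ioi (0 : ℝ), f x = 1) :
    ∃ s : ℝ, 0 < s ∧
      σ ^ 2 / 2 * s ^ 2 + c * s - (lam + q) + lam * r * laplace f s = 0 ∧
      ∀ s' : ℝ, 0 ≤ s' →
        σ ^ 2 / 2 * s' ^ 2 + c * s' - (lam + q) + lam * r * laplace f s' = 0 →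
        s' = s :=
  lundberg_unique_positive_root_general (.inr hc) (mul_nonneg hlam.le hr.1.le) hf_int
    (.of_forall hf_nonneg) (by rw [hf_one]; linarith [mul_le_of_le_one_right hlam.le hr.2])
end

section
/- Let f : ℝ → ℝ be measurable with ∫_0^∞ |f(x)| dx < ∞ and f vanishing on (−∞,0], and let r, s ≥ 0 with r ≠ s. Then for every x ≥ 0, T_s T_r f(x) = T_r T_s f(x) = (T_s f(x) − T_r f(x)) / (r − s), where T_r f(x) = ∫_x^∞ e^{−r(u−x)} f(u) du is the Dickson–Hipp operator. -/
open MeasureTheory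

/-- The Dickson–Hipp operator `T_r g(x) = ∫_x^∞ e^{-r(u-x)} g(u) du`. -/
noncomputable def dickson (r : ℝ) (g : ℝ → ℝ) (x : ℝ) : ℝ :=
  ∫ u in Set.Ioi x, Real.exp (-r * (u - x)) * g u

/-!
Pulling the factor `e^{rx}` out of the integral gives `T_r f(x) = e^{rx} ∫_x^∞ e^{-rv} f(v) dv`, so
`T_s T_r f(x) = e^{sx} ∫_x^∞ e^{(r-s)u} ∫_u^∞ e^{-rv} f(v) dv du`. By Fubini on the triangle
`x < u < v` the integral over `u` comes first and equals `(e^{(r-s)v} - e^{(r-s)x}) / (r - s)`; the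
two terms give `T_s f(x)` and `T_r f(x)`. The right-hand side is symmetric in `r` and `s`.
-/

open Set Real

section Triangle

variable {α E : Type*} [LinearOrder α] [TopologicalSpace α] [OrderClosedTopology α]
  [SecondCountableTopology α] [MeasurableSpace α] [OpensMeasurableSpace α] [NormedAddCommGroup E]
  {μ : Measure α} [SFinite μ] {x : α}

theorem measurableSet_setOf_lt_fst_lt_snd (x : α) :
    MeasurableSet {p : α × α | x < p.1 ∧ p.1 < p.2} :=
  (measurableSet_lt measurable_const measurable_fst).inter
    (measurableSet_lt measurable_fst measurable_snd)

theorem setIntegral_Ioi_Ioi_swap [NormedSpace ℝ E] {g : α → α → E}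
    (hg : IntegrableOn (Function.uncurry g) {p | x < p.1 ∧ p.1 < p.2} (μ.prod μ)) :
    ∫ u in Ioi x, ∫ v in Ioi u, g u v ∂μ ∂μ = ∫ v in Ioi x, ∫ u in Ioo x v, g u v ∂μ ∂μ := by
  set k : α → α → E := fun u v ↦
    indicator {p : α × α | x < p.1 ∧ p.1 < p.2} (Function.uncurry g) (u, v) with hk
  have k_left (u : α) : ∫ v, k u v ∂μ = (Ioi x).indicator (fun u ↦ ∫ v in Ioi u, g u v ∂μ) u := by
    by_cases hu : x < u
    · simp [hk, indicator_apply, hu, ← integral_indicator measurableSet_Ioi]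
    · simp [hk, hu]
  have k_right (v : α) :
      ∫ u, k u v ∂μ = (Ioi x).indicator (fun v ↦ ∫ u in Ioo x v, g u v ∂μ) v := by
    by_cases hv : x < v
    · simp [hk, indicator_apply, hv, ← integral_indicator measurableSet_Ioo]
    · have (u : α) : ¬(x < u ∧ u < v) := fun h ↦ hv (h.1.trans h.2)
      simp [hk, hv, this]
  have hk_int : Integrable (Function.uncurry k) (μ.prod μ) :=
    (integrable_indicator_iff (measurableSet_setOf_lt_fst_lt_snd x)).2 hg
  simpa only [k_left, k_right, integral_indicator measurableSet_Ioi] using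
    integral_integral_swap hk_int

theorem integrableOn_smul_setOf_lt_fst_lt_snd {𝕜 : Type*} [NormedField 𝕜] [NormedSpace 𝕜 E]
    {a : α → 𝕜} {h : α → E}
    (ha : AEStronglyMeasurable a (μ.restrict (Ioi x)))
    (ha_int : ∀ v > x, IntegrableOn a (Ioo x v) μ)
    (hh : AEStronglyMeasurable h (μ.restrict (Ioi x)))
    (hah : IntegrableOn (fun v ↦ (∫ u in Ioo x v, ‖a u‖ ∂μ) * ‖h v‖) (Ioi x) μ) :
    IntegrableOn (fun p : α × α ↦ a p.1 • h p.2) {p | x < p.1 ∧ p.1 < p.2} (μ.prod μ) := by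
  have setOf_eq_inter_prod : {p : α × α | x < p.1 ∧ p.1 < p.2} =
      {p | p.1 < p.2} ∩ Ioi x ×ˢ Ioi x := by
    ext p
    exact ⟨fun hp ↦ ⟨hp.2, hp.1, hp.1.trans hp.2⟩, fun hp ↦ ⟨hp.2.1, hp.1⟩⟩
  have hlt : MeasurableSet {p : α × α | p.1 < p.2} :=
    measurableSet_lt measurable_fst measurable_snd
  have smul_meas : AEStronglyMeasurable
      ({p : α × α | p.1 < p.2}.indicator fun p ↦ a p.1 • h p.2)
      ((μ.restrict (Ioi x)).prod (μ.restrict (Ioi x))) :=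
    (ha.comp_fst.smul hh.comp_snd).indicator hlt
  have slice (v : α) : (fun u ↦ {p : α × α | p.1 < p.2}.indicator (fun p ↦ a p.1 • h p.2) (u, v)) =
      (Iio v).indicator (fun u ↦ a u • h v) := rfl
  have restrict_slice (v : α) : (μ.restrict (Ioi x)).restrict (Iio v) = μ.restrict (Ioo x v) := by
    rw [Measure.restrict_restrict measurableSet_Iio, inter_comm, Ioi_inter_Iio]
  rw [setOf_eq_inter_prod, IntegrableOn, ← Measure.restrict_restrict hlt, ← Measure.prod_restrict,
    ← IntegrableOn, ← integrable_indicator_iff hlt, integrable_prod_iff' smul_meas]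
  constructor
  · filter_upwards [ae_restrict_mem measurableSet_Ioi] with v hv
    rw [slice, integrable_indicator_iff measurableSet_Iio, IntegrableOn, restrict_slice]
    exact (ha_int v hv).smul_const (h v)
  · refine hah.congr (.of_forall fun v ↦ ?_)
    simp only [norm_indicator_eq_indicator_norm]
    change _ = ∫ u, (Iio v).indicator (fun u ↦ ‖a u • h v‖) u ∂μ.restrict (Ioi x)
    simp only [integral_indicator measurableSet_Iio, restrict_slice, norm_smul, integral_mul_const]

end Triangle

theorem setIntegral_Ioo_exp_mul {c x v : ℝ} (hc : c ≠ 0) (hxv : x ≤ v) :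
    ∫ u in Ioo x v, exp (c * u) = (exp (c * v) - exp (c * x)) / c := by
  rw [← integral_Ioc_eq_integral_Ioo, ← intervalIntegral.integral_of_le hxv,
    intervalIntegral.integral_comp_mul_left exp hc, integral_exp, smul_eq_mul, inv_mul_eq_div]

theorem integrableOn_Ioi_exp_neg_mul_mul {μ : Measure ℝ} {f : ℝ → ℝ} {r x : ℝ} (hr : 0 ≤ r)
    (hf : IntegrableOn f (Ioi x) μ) :
    IntegrableOn (fun v ↦ exp (-r * v) * f v) (Ioi x) μ := by
  refine Integrable.bdd_mul (c := exp (-r * x)) hf (by fun_prop) ?_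
  filter_upwards [ae_restrict_mem measurableSet_Ioi] with v hv
  rw [norm_of_nonneg (exp_nonneg _), exp_le_exp]
  exact mul_le_mul_of_nonpos_left (le_of_lt hv) (neg_nonpos.2 hr)

theorem dickson_eq_exp_mul_setIntegral (r : ℝ) (g : ℝ → ℝ) (x : ℝ) :
    dickson r g x = exp (r * x) * ∫ u in Ioi x, exp (-r * u) * g u := by
  rw [dickson, ← integral_const_mul]
  congr! 2
  rw [← mul_assoc, ← exp_add]
  ring_nf

theorem dickson_dickson_eq_exp_mul_setIntegral (r s : ℝ) (f : ℝ → ℝ) (x : ℝ) :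
    dickson s (dickson r f) x =
      exp (s * x) *
        ∫ u in Ioi x, ∫ v in Ioi u, exp ((r - s) * u) * (exp (-r * v) * f v) := by
  rw [dickson_eq_exp_mul_setIntegral s]
  congr! 3 with u
  rw [dickson_eq_exp_mul_setIntegral, integral_const_mul, ← mul_assoc, ← exp_add]
  ring_nf

section Dickson

variable {f : ℝ → ℝ} {r s x : ℝ}

theorem setIntegral_Ioo_exp_mul_exp_mul (hrs : r ≠ s) {v : ℝ} (hxv : x ≤ v) (y : ℝ) :
    (∫ u in Ioo x v, exp ((r - s) * u)) * (exp (-r * v) * y) =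
      (exp (-s * v) * y - exp ((r - s) * x) * (exp (-r * v) * y)) / (r - s) := by
  have exp_split : exp (-s * v) = exp ((r - s) * v) * exp (-r * v) := by
    rw [← exp_add]
    ring_nf
  rw [setIntegral_Ioo_exp_mul (sub_ne_zero.2 hrs) hxv, exp_split]
  ring

theorem integrableOn_exp_mul_mul_setOf_lt_fst_lt_snd (hrs : r ≠ s)
    (hfr : IntegrableOn (fun v ↦ exp (-r * v) * f v) (Ioi x))
    (hfs : IntegrableOn (fun v ↦ exp (-s * v) * f v) (Ioi x)) :
    IntegrableOn (fun p : ℝ × ℝ ↦ exp ((r - s) * p.1) * (exp (-r * p.2) * f p.2))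
      {p | x < p.1 ∧ p.1 < p.2} := by
  have weight_continuous : Continuous fun u ↦ exp ((r - s) * u) := by fun_prop
  refine integrableOn_smul_setOf_lt_fst_lt_snd weight_continuous.aestronglyMeasurable
    (fun v _ ↦ weight_continuous.integrableOn_Icc.mono_set Ioo_subset_Icc_self)
    hfr.aestronglyMeasurable ?_
  refine ((hfs.sub (hfr.const_mul (exp ((r - s) * x)))).div_const (r - s)).norm.congr ?_
  filter_upwards [ae_restrict_mem measurableSet_Ioi] with v hv
  have weight_integral_nonneg : 0 ≤ ∫ u in Ioo x v, exp ((r - s) * u) :=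
    integral_nonneg fun _ ↦ exp_nonneg _
  simp only [Pi.sub_apply, norm_of_nonneg (exp_nonneg _)]
  rw [← setIntegral_Ioo_exp_mul_exp_mul hrs (le_of_lt hv), norm_mul,
    norm_of_nonneg weight_integral_nonneg]

theorem dickson_dickson_eq_sub_div (hrs : r ≠ s)
    (hfr : IntegrableOn (fun v ↦ exp (-r * v) * f v) (Ioi x))
    (hfs : IntegrableOn (fun v ↦ exp (-s * v) * f v) (Ioi x)) :
    dickson s (dickson r f) x = (dickson s f x - dickson r f x) / (r - s) := by
  have exp_split : exp (r * x) = exp (s * x) * exp ((r - s) * x) := by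
    rw [← exp_add]
    ring_nf
  calc dickson s (dickson r f) x
    _ = exp (s * x) * ∫ u in Ioi x, ∫ v in Ioi u, exp ((r - s) * u) * (exp (-r * v) * f v) :=
      dickson_dickson_eq_exp_mul_setIntegral r s f x
    _ = exp (s * x) * ∫ v in Ioi x, ∫ u in Ioo x v, exp ((r - s) * u) * (exp (-r * v) * f v) := by
      rw [setIntegral_Ioi_Ioi_swap (integrableOn_exp_mul_mul_setOf_lt_fst_lt_snd hrs hfr hfs)]
    _ = exp (s * x) * ∫ v in Ioi x,
          (exp (-s * v) * f v - exp ((r - s) * x) * (exp (-r * v) * f v)) / (r - s) := by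
      congr 1
      refine setIntegral_congr_fun measurableSet_Ioi fun v hv ↦ ?_
      rw [integral_mul_const, setIntegral_Ioo_exp_mul_exp_mul hrs (le_of_lt hv)]
    _ = (dickson s f x - dickson r f x) / (r - s) := by
      rw [integral_div, integral_sub hfs (hfr.const_mul _), integral_const_mul,
        dickson_eq_exp_mul_setIntegral s, dickson_eq_exp_mul_setIntegral r, exp_split]
      ring

theorem dickson_comm_resolvent_general (hrs : r ≠ s)
    (hfr : IntegrableOn (fun v ↦ exp (-r * v) * f v) (Ioi x))
    (hfs : IntegrableOn (fun v ↦ exp (-s * v) * f v) (Ioi x)) :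
    dickson s (dickson r f) x = dickson r (dickson s f) x ∧
    dickson s (dickson r f) x = (dickson s f x - dickson r f x) / (r - s) := by
  refine ⟨?_, dickson_dickson_eq_sub_div hrs hfr hfs⟩
  rw [dickson_dickson_eq_sub_div hrs hfr hfs, dickson_dickson_eq_sub_div hrs.symm hfs hfr,
    ← neg_div_neg_eq, neg_sub, neg_sub]

end Dickson

/-- Commutativity and resolvent-type identity for the Dickson–Hipp operator. -/
theorem dickson_comm_resolvent
    (f : ℝ → ℝ) (hf_meas : Measurable f) (hf_zero : ∀ x ≤ 0, f x = 0)
    (hf_int : IntegrableOn f (Set.Ioi 0))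
    (r s : ℝ) (hr : 0 ≤ r) (hs : 0 ≤ s) (hrs : r ≠ s)
    (x : ℝ) (hx : 0 ≤ x) :
    dickson s (dickson r f) x = dickson r (dickson s f) x ∧
    dickson s (dickson r f) x = (dickson s f x - dickson r f x) / (r - s) := by
  have hf : IntegrableOn f (Ioi x) := hf_int.mono_set (Ioi_subset_Ioi hx)
  exact dickson_comm_resolvent_general hrs (integrableOn_Ioi_exp_neg_mul_mul hr hf)
    (integrableOn_Ioi_exp_neg_mul_mul hs hf)
end

section
/- Let k, φ : ℝ → ℝ be measurable functions vanishing on (−∞,0] that are bounded on every compact interval. Then for every x ≥ 0 the series ξ(x) := φ(x) + Σ_{n=1}^∞ (k^{*n} * φ)(x) converges absolutely, and the resulting function ξ satisfies the renewal (Volterra convolution) equation ξ(x) = ∫_0^x k(x − y) ξ(y) dy + φ(x) for every x ≥ 0. -/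
open MeasureTheory

/-- Convolution of functions vanishing on `(-∞, 0]`:
`(g * h)(x) = ∫_0^x g(x-y) h(y) dy`. -/
noncomputable def conv (g h : ℝ → ℝ) (x : ℝ) : ℝ :=
  ∫ y in (0 : ℝ)..x, g (x - y) * h y

/-- `nconv g n = g^{*(n+1)}`, the `(n+1)`-fold convolution of `g` with itself
(so that `nconv g 0 = g^{*1} = g`). -/
noncomputable def nconv (g : ℝ → ℝ) : ℕ → ℝ → ℝ
  | 0 => g
  | n + 1 => conv g (nconv g n)

/-!
Only the values of `k` and `φ` on `[0, x]` enter the equation at `x`, so truncating both to `[0, x]`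
turns `conv` into the convolution of integrable functions on the line; Fubini then makes it
associative, and `k * (k^{*n} * φ) = k^{*(n+1)} * φ`. If `|k| ≤ M` on `[0, T]`, then
`|k^{*(n+1)}(x)| ≤ M ^ (n + 1) * x ^ n / n!` there, so the Neumann series is dominated by an
exponential series. It may therefore be convolved with `k` term by term, which shifts its terms by
one place.
-/

open scoped Convolution Pointwise

theorem sub_mem_Icc_zero_self {G : Type*} [AddCommGroup G] [PartialOrder G] [IsOrderedAddMonoid G]
    {x y : G} (hy : y ∈ Set.Icc 0 x) : x - y ∈ Set.Icc 0 x :=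
  ⟨sub_nonneg.2 hy.2, sub_le_self x hy.1⟩

theorem convolution_mul_assoc_of_bounded {G 𝕜 : Type*} [AddCommGroup G] [MeasurableSpace G]
    [MeasurableAdd₂ G] [MeasurableNeg G] {μ : Measure G} [SFinite μ] [μ.IsAddLeftInvariant]
    [μ.IsNegInvariant] [RCLike 𝕜] {f g h : G → 𝕜} {C : ℝ} (hf : Integrable f μ)
    (hfC : ∀ u, ‖f u‖ ≤ C) (hg : Integrable g μ) (hh : Integrable h μ) :
    (f ⋆[.mul 𝕜 𝕜, μ] g) ⋆[.mul 𝕜 𝕜, μ] h = f ⋆[.mul 𝕜 𝕜, μ] (g ⋆[.mul 𝕜 𝕜, μ] h) := by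
  funext x
  have hgh : Integrable (fun t => ((‖g ·‖) ⋆[.mul ℝ ℝ, μ] (‖h ·‖)) (x - t)) μ :=
    (hg.norm.integrable_convolution (.mul ℝ ℝ) hh.norm).comp_sub_left x
  exact convolution_assoc _ _ _ _ mul_assoc hf.1 hg.1 hh.1 (hf.ae_convolution_exists _ hg)
    (hg.norm.ae_convolution_exists _ hh.norm)
    (hgh.bdd_mul hf.norm.1 (.of_forall fun u => (norm_norm (f u)).trans_le (hfC u)))

section Convolution

variable {f g h g' h' : ℝ → ℝ} {x C T : ℝ}

theorem conv_eq_setIntegral_Icc (hx : 0 ≤ x) :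
    conv g h x = ∫ y in Set.Icc 0 x, g (x - y) * h y := by
  rw [conv, intervalIntegral.integral_of_le hx, integral_Icc_eq_integral_Ioc]

theorem eqOn_conv (hg : Set.EqOn g g' (Set.Icc 0 T)) (hh : Set.EqOn h h' (Set.Icc 0 T)) :
    Set.EqOn (conv g h) (conv g' h') (Set.Icc 0 T) := by
  intro x hx
  have hsub : Set.Icc 0 x ⊆ Set.Icc 0 T := Set.Icc_subset_Icc_right hx.2
  rw [conv_eq_setIntegral_Icc hx.1, conv_eq_setIntegral_Icc hx.1]
  refine setIntegral_congr_fun measurableSet_Icc fun y hy => ?_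
  simp only [hg (hsub (sub_mem_Icc_zero_self hy)), hh (hsub hy)]

theorem integrableOn_conv_integrand (hg : IntegrableOn g (Set.Icc 0 x))
    (hgC : ∀ u ∈ Set.Icc 0 x, |g u| ≤ C) (hh : IntegrableOn h (Set.Icc 0 x)) :
    IntegrableOn (fun y => g (x - y) * h y) (Set.Icc 0 x) := by
  have hg_reflect : IntegrableOn (fun y => g (x - y)) (Set.Icc 0 x) := by
    have := (Measure.measurePreserving_sub_left volume x).integrableOn_comp_preimage
      (MeasurableEquiv.subLeft x).measurableEmbedding (f := g) (s := Set.Icc 0 x)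
    rw [Set.preimage_const_sub_Icc, sub_self, sub_zero] at this
    exact this.2 hg
  refine Integrable.bdd_mul (c := C) hh hg_reflect.aestronglyMeasurable ?_
  filter_upwards [ae_restrict_mem measurableSet_Icc] with y hy
  exact hgC _ (sub_mem_Icc_zero_self hy)

theorem setIntegral_abs_conv_integrand_le (hgC : ∀ u ∈ Set.Icc 0 x, |g u| ≤ C)
    (hh : IntegrableOn h (Set.Icc 0 x)) :
    ∫ y in Set.Icc 0 x, |g (x - y) * h y| ≤ C * ∫ y in Set.Icc 0 x, |h y| := by
  rw [← integral_const_mul]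
  refine integral_mono_of_nonneg (.of_forall fun _ => abs_nonneg _) (hh.abs.const_mul C) ?_
  filter_upwards [ae_restrict_mem measurableSet_Icc] with y hy
  rw [abs_mul]
  exact mul_le_mul_of_nonneg_right (hgC _ (sub_mem_Icc_zero_self hy)) (abs_nonneg _)

theorem abs_conv_le (hx : 0 ≤ x) (hgC : ∀ u ∈ Set.Icc 0 x, |g u| ≤ C)
    (hh : IntegrableOn h (Set.Icc 0 x)) :
    |conv g h x| ≤ C * ∫ y in Set.Icc 0 x, |h y| := by
  rw [conv_eq_setIntegral_Icc hx]
  exact abs_integral_le_integral_abs.trans (setIntegral_abs_conv_integrand_le hgC hh)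

theorem conv_eq_convolution (hg : g.support ⊆ Set.Ici 0) (hh : h.support ⊆ Set.Ici 0)
    (hx : 0 ≤ x) : conv g h x = (g ⋆[.mul ℝ ℝ] h) x := by
  rw [conv_eq_setIntegral_Icc hx, convolution_mul_swap]
  refine setIntegral_eq_integral_of_forall_compl_eq_zero fun y hy => ?_
  contrapose! hy
  exact ⟨hh (right_ne_zero_of_mul hy), sub_nonneg.1 (hg (left_ne_zero_of_mul hy))⟩

theorem support_convolution_subset_Ici (hg : g.support ⊆ Set.Ici 0)
    (hh : h.support ⊆ Set.Ici 0) :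
    (g ⋆[.mul ℝ ℝ] h).support ⊆ Set.Ici 0 :=
  calc (g ⋆[.mul ℝ ℝ] h).support
      ⊆ g.support + h.support := support_convolution_subset _
    _ ⊆ Set.Ici 0 + Set.Ici 0 := Set.add_subset_add hg hh
    _ ⊆ Set.Ici 0 := by simpa only [add_zero] using Set.Ici_add_Ici_subset (0 : ℝ) 0

theorem support_indicator_Icc_subset_Ici : ((Set.Icc 0 T).indicator g).support ⊆ Set.Ici 0 :=
  Set.support_indicator_subset.trans Set.Icc_subset_Ici_self

theorem eqOn_conv_convolution_indicator :
    Set.EqOn (conv g h)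
      ((Set.Icc 0 T).indicator g ⋆[.mul ℝ ℝ] (Set.Icc 0 T).indicator h)
      (Set.Icc 0 T) := fun x hx =>
  calc conv g h x
      = conv ((Set.Icc 0 T).indicator g) ((Set.Icc 0 T).indicator h) x :=
        eqOn_conv Set.eqOn_indicator.symm Set.eqOn_indicator.symm hx
    _ = _ := conv_eq_convolution support_indicator_Icc_subset_Ici
        support_indicator_Icc_subset_Ici hx.1

theorem integrableOn_conv (hg : IntegrableOn g (Set.Icc 0 T)) (hh : IntegrableOn h (Set.Icc 0 T)) :
    IntegrableOn (conv g h) (Set.Icc 0 T) :=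
  ((hg.integrable_indicator measurableSet_Icc).integrable_convolution _
    (hh.integrable_indicator measurableSet_Icc)).integrableOn.congr_fun
    eqOn_conv_convolution_indicator.symm measurableSet_Icc

theorem conv_assoc (hx : 0 ≤ x) (hf : IntegrableOn f (Set.Icc 0 x))
    (hfC : ∀ u ∈ Set.Icc 0 x, |f u| ≤ C) (hg : IntegrableOn g (Set.Icc 0 x))
    (hh : IntegrableOn h (Set.Icc 0 x)) :
    conv (conv f g) h x = conv f (conv g h) x := by
  let trunc : (ℝ → ℝ) → ℝ → ℝ := (Set.Icc 0 x).indicator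
  have trunc_eq (u : ℝ → ℝ) : Set.EqOn u (trunc u) (Set.Icc 0 x) := Set.eqOn_indicator.symm
  have trunc_support (u : ℝ → ℝ) : (trunc u).support ⊆ Set.Ici 0 :=
    support_indicator_Icc_subset_Ici
  have trunc_bdd (u : ℝ) : |trunc f u| ≤ C := by
    by_cases hu : u ∈ Set.Icc 0 x
    · rw [← trunc_eq f hu]
      exact hfC u hu
    · have hC : 0 ≤ C := (abs_nonneg _).trans (hfC x ⟨hx, le_rfl⟩)
      simpa only [trunc, Set.indicator_of_notMem hu, abs_zero]
  calc conv (conv f g) h x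
      = conv (trunc f ⋆[.mul ℝ ℝ] trunc g) (trunc h) x :=
        eqOn_conv eqOn_conv_convolution_indicator (trunc_eq h) ⟨hx, le_rfl⟩
    _ = ((trunc f ⋆[.mul ℝ ℝ] trunc g) ⋆[.mul ℝ ℝ] trunc h) x :=
        conv_eq_convolution
          (support_convolution_subset_Ici (trunc_support f) (trunc_support g)) (trunc_support h) hx
    _ = (trunc f ⋆[.mul ℝ ℝ] (trunc g ⋆[.mul ℝ ℝ] trunc h)) x := by
        rw [convolution_mul_assoc_of_bounded (hf.integrable_indicator measurableSet_Icc) trunc_bdd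
          (hg.integrable_indicator measurableSet_Icc) (hh.integrable_indicator measurableSet_Icc)]
    _ = conv (trunc f) (trunc g ⋆[.mul ℝ ℝ] trunc h) x :=
        (conv_eq_convolution (trunc_support f)
          (support_convolution_subset_Ici (trunc_support g) (trunc_support h)) hx).symm
    _ = conv f (conv g h) x :=
        (eqOn_conv (trunc_eq f) eqOn_conv_convolution_indicator ⟨hx, le_rfl⟩).symm

theorem hasSum_conv_tsum {ι : Type*} [Countable ι] {ψ : ι → ℝ → ℝ} (hx : 0 ≤ x)
    (hg : IntegrableOn g (Set.Icc 0 x)) (hgC : ∀ u ∈ Set.Icc 0 x, |g u| ≤ C)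
    (hψ : ∀ i, IntegrableOn (ψ i) (Set.Icc 0 x))
    (hψ_sum : Summable fun i => ∫ y in Set.Icc 0 x, |ψ i y|) :
    HasSum (fun i => conv g (ψ i) x) (conv g (fun y => ∑' i, ψ i y) x) := by
  simp only [conv_eq_setIntegral_Icc hx, ← tsum_mul_left]
  refine hasSum_integral_of_summable_integral_norm
    (fun i => integrableOn_conv_integrand hg hgC (hψ i)) ?_
  exact (hψ_sum.mul_left C).of_nonneg_of_le (fun _ => integral_nonneg fun _ => norm_nonneg _)
    fun i => setIntegral_abs_conv_integrand_le hgC (hψ i)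

end Convolution

/-- The `n`-th term `k^{*n} * φ` of the Neumann series of the renewal equation; `k^{*0}`, which
is not a function and has no counterpart in `nconv`, stands for the identity of convolution. -/
noncomputable def neumannTerm (k φ : ℝ → ℝ) : ℕ → ℝ → ℝ
  | 0 => φ
  | n + 1 => conv (nconv k n) φ

section NeumannSeries

variable {k φ : ℝ → ℝ} {M T x : ℝ}

theorem integrableOn_nconv (hk : IntegrableOn k (Set.Icc 0 T)) (n : ℕ) :
    IntegrableOn (nconv k n) (Set.Icc 0 T) := by
  induction n with
  | zero => exact hk
  | succ n ih => exact integrableOn_conv hk ih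

theorem integrableOn_neumannTerm (hk : IntegrableOn k (Set.Icc 0 T))
    (hφ : IntegrableOn φ (Set.Icc 0 T)) : ∀ n, IntegrableOn (neumannTerm k φ n) (Set.Icc 0 T)
  | 0 => hφ
  | n + 1 => integrableOn_conv (integrableOn_nconv hk n) hφ

theorem conv_neumannTerm (hx : 0 ≤ x) (hk : IntegrableOn k (Set.Icc 0 x))
    (hkM : ∀ u ∈ Set.Icc 0 x, |k u| ≤ M) (hφ : IntegrableOn φ (Set.Icc 0 x)) :
    ∀ n, conv k (neumannTerm k φ n) x = neumannTerm k φ (n + 1) x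
  | 0 => rfl
  | n + 1 => (conv_assoc hx hk hkM (integrableOn_nconv hk n) hφ).symm

theorem abs_nconv_le (hkM : ∀ u ∈ Set.Icc 0 T, |k u| ≤ M) (n : ℕ) :
    ∀ x ∈ Set.Icc 0 T, |nconv k n x| ≤ M ^ (n + 1) * (x ^ n / n.factorial) := by
  induction n with
  | zero => simpa [nconv] using hkM
  | succ n ih =>
    intro x hx
    have hsub : Set.Icc 0 x ⊆ Set.Icc 0 T := Set.Icc_subset_Icc_right hx.2
    have integrand_le (y : ℝ) (hy : y ∈ Set.Ioc 0 x) :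
        |k (x - y) * nconv k n y| ≤ M * (M ^ (n + 1) * (y ^ n / n.factorial)) := by
      have hy' : y ∈ Set.Icc 0 x := Set.Ioc_subset_Icc_self hy
      rw [abs_mul]
      exact mul_le_mul (hkM _ (hsub (sub_mem_Icc_zero_self hy'))) (ih y (hsub hy'))
        (abs_nonneg _) ((abs_nonneg _).trans (hkM x hx))
    have bound_cont : Continuous fun y : ℝ => M * (M ^ (n + 1) * (y ^ n / n.factorial)) := by
      fun_prop
    calc |nconv k (n + 1) x|
      _ = ‖∫ y in (0 : ℝ)..x, k (x - y) * nconv k n y‖ := rfl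
      _ ≤ ∫ y in (0 : ℝ)..x, M * (M ^ (n + 1) * (y ^ n / n.factorial)) :=
          intervalIntegral.norm_integral_le_of_norm_le hx.1 (.of_forall integrand_le)
            (bound_cont.intervalIntegrable 0 x)
      _ = M ^ (n + 2) * (x ^ (n + 1) / (n + 1).factorial) := by
          simp only [intervalIntegral.integral_const_mul, intervalIntegral.integral_div,
            integral_pow, Nat.factorial_succ]
          push_cast
          field_simp
          ring

theorem abs_conv_nconv_le (hkM : ∀ u ∈ Set.Icc 0 T, |k u| ≤ M) (hφ : IntegrableOn φ (Set.Icc 0 T))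
    (n : ℕ) (hx : x ∈ Set.Icc 0 T) :
    |conv (nconv k n) φ x| ≤
      (M * T) ^ n / n.factorial * (M * ∫ y in Set.Icc 0 T, |φ y|) := by
  have hM : 0 ≤ M := (abs_nonneg _).trans (hkM x hx)
  have hT : 0 ≤ T := hx.1.trans hx.2
  have hsub : Set.Icc 0 x ⊆ Set.Icc 0 T := Set.Icc_subset_Icc_right hx.2
  have nconv_le (u : ℝ) (hu : u ∈ Set.Icc 0 x) :
      |nconv k n u| ≤ M ^ (n + 1) * (T ^ n / n.factorial) := by
    have hu0 : 0 ≤ u := hu.1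
    have huT : u ≤ T := (hsub hu).2
    refine (abs_nconv_le hkM n u (hsub hu)).trans ?_
    gcongr
  calc |conv (nconv k n) φ x|
      ≤ M ^ (n + 1) * (T ^ n / n.factorial) * ∫ y in Set.Icc 0 x, |φ y| :=
        abs_conv_le hx.1 nconv_le (hφ.mono_set hsub)
    _ ≤ M ^ (n + 1) * (T ^ n / n.factorial) * ∫ y in Set.Icc 0 T, |φ y| := by
        gcongr ?_ * ?_
        exact setIntegral_mono_set hφ.abs (.of_forall fun _ => abs_nonneg _) hsub.eventuallyLE
    _ = (M * T) ^ n / n.factorial * (M * ∫ y in Set.Icc 0 T, |φ y|) := by ring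

theorem summable_abs_conv_nconv (hkM : ∀ u ∈ Set.Icc 0 x, |k u| ≤ M)
    (hφ : IntegrableOn φ (Set.Icc 0 x)) (hx : 0 ≤ x) :
    Summable fun n => |conv (nconv k n) φ x| :=
  ((Real.summable_pow_div_factorial (M * x)).mul_right _).of_nonneg_of_le
    (fun _ => abs_nonneg _) fun n => abs_conv_nconv_le hkM hφ n ⟨hx, le_rfl⟩

theorem summable_setIntegral_abs_neumannTerm (hkM : ∀ u ∈ Set.Icc 0 T, |k u| ≤ M)
    (hφ : IntegrableOn φ (Set.Icc 0 T)) :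
    Summable fun n => ∫ y in Set.Icc 0 T, |neumannTerm k φ n y| := by
  let b (n : ℕ) : ℝ := (M * T) ^ n / n.factorial * (M * ∫ y in Set.Icc 0 T, |φ y|)
  have hb : Summable b := (Real.summable_pow_div_factorial (M * T)).mul_right _
  have integral_le (n : ℕ) :
      ∫ y in Set.Icc 0 T, |neumannTerm k φ (n + 1) y| ≤ b n * volume.real (Set.Icc 0 T) := by
    rw [← Real.norm_of_nonneg (integral_nonneg fun _ => abs_nonneg _)]
    refine norm_setIntegral_le_of_norm_le_const measure_Icc_lt_top fun y hy => ?_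
    rw [Real.norm_eq_abs, abs_abs]
    exact abs_conv_nconv_le hkM hφ n hy
  exact (summable_nat_add_iff 1).1 <| (hb.mul_right _).of_nonneg_of_le
    (fun _ => integral_nonneg fun _ => abs_nonneg _) integral_le

theorem tsum_neumannTerm (hsum : Summable fun n => |conv (nconv k n) φ x|) :
    ∑' n, neumannTerm k φ n x = φ x + ∑' n, conv (nconv k n) φ x :=
  Summable.tsum_eq_zero_add ((summable_nat_add_iff 1).1 hsum.of_abs)

end NeumannSeries

theorem integrableOn_Icc_of_measurable_of_bounded {f : ℝ → ℝ} {a b : ℝ} (hf : Measurable f)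
    (hf_bdd : ∃ M : ℝ, ∀ u ∈ Set.Icc a b, |f u| ≤ M) : IntegrableOn f (Set.Icc a b) :=
  let ⟨_, hM⟩ := hf_bdd
  Measure.integrableOn_of_bounded measure_Icc_lt_top.ne hf.aestronglyMeasurable
    (ae_restrict_of_forall_mem measurableSet_Icc hM)

theorem neumann_series_solves_renewal_equation_general {k φ : ℝ → ℝ}
    (hk : ∀ T, IntegrableOn k (Set.Icc 0 T))
    (hk_bdd : ∀ T : ℝ, ∃ M : ℝ, ∀ u ∈ Set.Icc 0 T, |k u| ≤ M)
    (hφ : ∀ T, IntegrableOn φ (Set.Icc 0 T)) :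
    (∀ x, 0 ≤ x → Summable fun n : ℕ => |conv (nconv k n) φ x|) ∧
    (∀ x, 0 ≤ x →
      φ x + (∑' n : ℕ, conv (nconv k n) φ x)
        = (∫ y in (0 : ℝ)..x,
            k (x - y) * (φ y + ∑' n : ℕ, conv (nconv k n) φ y)) + φ x) := by
  have hsum (x : ℝ) (hx : 0 ≤ x) : Summable fun n : ℕ => |conv (nconv k n) φ x| :=
    let ⟨_, hM⟩ := hk_bdd x
    summable_abs_conv_nconv hM (hφ x) hx
  refine ⟨hsum, fun x hx => ?_⟩
  obtain ⟨M, hM⟩ := hk_bdd x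
  calc φ x + ∑' n, conv (nconv k n) φ x
      = ∑' n, neumannTerm k φ (n + 1) x + φ x := add_comm _ _
    _ = ∑' n, conv k (neumannTerm k φ n) x + φ x := by
        simp only [conv_neumannTerm hx (hk x) hM (hφ x)]
    _ = conv k (fun y => ∑' n, neumannTerm k φ n y) x + φ x := by
        rw [(hasSum_conv_tsum hx (hk x) hM (integrableOn_neumannTerm (hk x) (hφ x))
          (summable_setIntegral_abs_neumannTerm hM (hφ x))).tsum_eq]
    _ = conv k (fun y => φ y + ∑' n, conv (nconv k n) φ y) x + φ x := by
        rw [eqOn_conv (Set.eqOn_refl k _) (fun y hy => tsum_neumannTerm (hsum y hy.1)) ⟨hx, le_rfl⟩]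

/-- The Neumann series `ξ = φ + Σ_{n≥1} k^{*n} * φ` converges absolutely at every
`x ≥ 0` and solves the renewal (Volterra convolution) equation
`ξ(x) = ∫_0^x k(x-y) ξ(y) dy + φ(x)`. -/
theorem neumann_series_solves_renewal_equation
    (k φ : ℝ → ℝ) (hk_meas : Measurable k) (hφ_meas : Measurable φ)
    (hk_zero : ∀ u ≤ 0, k u = 0) (hφ_zero : ∀ u ≤ 0, φ u = 0)
    (hk_bdd : ∀ a b : ℝ, ∃ M : ℝ, ∀ u ∈ Set.Icc a b, |k u| ≤ M)
    (hφ_bdd : ∀ a b : ℝ, ∃ M : ℝ, ∀ u ∈ Set.Icc a b, |φ u| ≤ M) :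
    (∀ x, 0 ≤ x → Summable fun n : ℕ => |conv (nconv k n) φ x|) ∧
    (∀ x, 0 ≤ x →
      φ x + (∑' n : ℕ, conv (nconv k n) φ x)
        = (∫ y in (0 : ℝ)..x,
            k (x - y) * (φ y + ∑' n : ℕ, conv (nconv k n) φ y)) + φ x) :=
  neumann_series_solves_renewal_equation_general
    (fun T => integrableOn_Icc_of_measurable_of_bounded hk_meas (hk_bdd 0 T)) (hk_bdd 0)
    (fun T => integrableOn_Icc_of_measurable_of_bounded hφ_meas (hφ_bdd 0 T))
end

section
/- Let k, φ : ℝ → ℝ be measurable functions vanishing on (−∞,0] that are bounded on every compact interval. If ξ₁, ξ₂ : ℝ → ℝ are measurable, vanish on (−∞,0], are bounded on every compact interval, and both satisfy ξᵢ(x) = ∫_0^x k(x − y) ξᵢ(y) dy + φ(x) for all x ≥ 0, then ξ₁(x) = ξ₂(x) for all x. -/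
open MeasureTheory

/-!
The difference `u` of two solutions satisfies `u = k * u`. In the norm `sup ‖u x‖ e ^ (-r x)` on
`[0, T]`, convolution with `k` is Lipschitz with constant `q = ∫_0^T e ^ (-r s) ‖k s‖ ds`, which
tends to `0` as `r → ∞`. For `r` with `q < 1`, iterating `u = k * u` gives
`‖u x‖ ≤ q ^ n M e ^ (r x)` for all `n`, so `u = 0`.
-/

open Set Filter Topology

section CausalConvolution

variable {A E : Type*} [NormedRing A] [NormedAddCommGroup E]

theorem intervalIntegrable_of_aestronglyMeasurable_of_norm_le {f : ℝ → E} {a b : ℝ}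
    {μ : Measure ℝ} [IsLocallyFiniteMeasure μ] (hf : AEStronglyMeasurable f (μ.restrict (uIoc a b)))
    (hf_bdd : ∃ M, ∀ x ∈ uIoc a b, ‖f x‖ ≤ M) : IntervalIntegrable f μ a b := by
  obtain ⟨M, hM⟩ := hf_bdd
  exact intervalIntegrable_const.mono_fun' (g := fun _ => M) hf
    (ae_restrict_of_forall_mem measurableSet_uIoc hM)

theorem intervalIntegrable_comp_sub_left_of_zero_left {f : ℝ → E} {x : ℝ}
    (hf : IntervalIntegrable f volume 0 x) :
    IntervalIntegrable (fun y => f (x - y)) volume 0 x := by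
  simpa only [sub_zero, sub_self] using (hf.comp_sub_left x).symm

theorem tendsto_intervalIntegral_exp_neg_mul_smul_atTop [NormedSpace ℝ E]
    {f : ℝ → E} {T : ℝ} (hT : 0 ≤ T) (hf : IntervalIntegrable f volume 0 T) :
    Tendsto (fun r : ℝ => ∫ s in 0..T, Real.exp (-(r * s)) • f s) atTop (𝓝 0) := by
  rw [← intervalIntegral.integral_zero (E := E) (a := 0) (b := T) (μ := volume)]
  refine intervalIntegral.tendsto_integral_filter_of_dominated_convergence (fun s => ‖f s‖)
    (.of_forall fun r => ?_) ?_ hf.norm (.of_forall fun s hs => ?_)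
  · exact (by fun_prop : Continuous fun s => Real.exp (-(r * s))).aestronglyMeasurable.smul
      hf.def'.aestronglyMeasurable
  · filter_upwards [eventually_ge_atTop 0] with r hr
    refine .of_forall fun s hs => ?_
    rw [uIoc_of_le hT] at hs
    rw [norm_smul, Real.norm_eq_abs, Real.abs_exp]
    exact mul_le_of_le_one_left (norm_nonneg _)
      (Real.exp_le_one_iff.2 (neg_nonpos.2 (mul_nonneg hr hs.1.le)))
  · rw [uIoc_of_le hT] at hs
    have hexp : Tendsto (fun r : ℝ => Real.exp (-(r * s))) atTop (𝓝 0) :=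
      Real.tendsto_exp_neg_atTop_nhds_zero.comp (tendsto_id.atTop_mul_const hs.1)
    simpa only [zero_smul] using hexp.smul_const (f s)

/-- The Laplace transform of `‖f‖` at `r`, truncated to `[0, T]`. It bounds the operator norm of
convolution with `f` in the weighted norm `sup ‖u x‖ e ^ (-r x)` on `[0, T]`. -/
noncomputable def truncLaplaceNorm (f : ℝ → E) (r T : ℝ) : ℝ :=
  ∫ s in 0..T, Real.exp (-(r * s)) * ‖f s‖

theorem truncLaplaceNorm_nonneg (f : ℝ → E) (r : ℝ) {T : ℝ} (hT : 0 ≤ T) :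
    0 ≤ truncLaplaceNorm f r T :=
  intervalIntegral.integral_nonneg hT fun s _ => by positivity

theorem truncLaplaceNorm_le_of_le {f : ℝ → E} {x T : ℝ} (r : ℝ) (hx : 0 ≤ x) (hxT : x ≤ T)
    (hf : IntervalIntegrable f volume 0 T) :
    truncLaplaceNorm f r x ≤ truncLaplaceNorm f r T :=
  intervalIntegral.integral_mono_interval le_rfl hx hxT (.of_forall fun s => by positivity)
    (hf.norm.continuousOn_mul (by fun_prop))

theorem tendsto_truncLaplaceNorm_atTop {f : ℝ → E} {T : ℝ} (hT : 0 ≤ T)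
    (hf : IntervalIntegrable f volume 0 T) :
    Tendsto (fun r => truncLaplaceNorm f r T) atTop (𝓝 0) :=
  tendsto_intervalIntegral_exp_neg_mul_smul_atTop hT hf.norm

variable [Module A E] {k : ℝ → A} {u v : ℝ → E}

theorem intervalIntegrable_comp_sub_left_smul [IsBoundedSMul A E] {x : ℝ}
    (hk : IntervalIntegrable k volume 0 x)
    (hu : AEStronglyMeasurable u (volume.restrict (uIoc 0 x)))
    (hu_bdd : ∃ M, ∀ y ∈ uIoc 0 x, ‖u y‖ ≤ M) :
    IntervalIntegrable (fun y => k (x - y) • u y) volume 0 x := by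
  obtain ⟨M, hM⟩ := hu_bdd
  exact intervalIntegrable_iff.2 ((intervalIntegrable_comp_sub_left_of_zero_left hk).def'.smul_bdd
    M hu (ae_restrict_of_forall_mem measurableSet_uIoc hM))

variable [NormedSpace ℝ E]

/-- The convolution `(k * u) (x) = ∫_0^x k (x - y) u (y) dy` of functions on the half-line
`[0, ∞)`, the kernel acting on the values of `u` by scalar multiplication. The values of `k` and
`u` on `(-∞, 0)` do not enter when `0 ≤ x`. -/
noncomputable def causalConvolution (k : ℝ → A) (u : ℝ → E) (x : ℝ) : E :=
  ∫ y in 0..x, k (x - y) • u y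

theorem causalConvolution_sub {x : ℝ}
    (hu : IntervalIntegrable (fun y => k (x - y) • u y) volume 0 x)
    (hv : IntervalIntegrable (fun y => k (x - y) • v y) volume 0 x) :
    causalConvolution k (u - v) x = causalConvolution k u x - causalConvolution k v x := by
  simp only [causalConvolution, Pi.sub_apply, smul_sub, intervalIntegral.integral_sub hu hv]

variable [IsBoundedSMul A E]

theorem norm_causalConvolution_le_exp {S r x : ℝ} (hx : 0 ≤ x)
    (hk : IntervalIntegrable k volume 0 x)
    (hu : ∀ y ∈ Ioc 0 x, ‖u y‖ ≤ S * Real.exp (r * y)) :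
    ‖causalConvolution k u x‖ ≤ truncLaplaceNorm k r x * (S * Real.exp (r * x)) := by
  set g : ℝ → ℝ := fun s => Real.exp (-(r * s)) * ‖k s‖ * (S * Real.exp (r * x))
  have hg : IntervalIntegrable g volume 0 x :=
    (hk.norm.continuousOn_mul (by fun_prop)).mul_const _
  have hbound : ∀ y ∈ Ioc 0 x, ‖k (x - y) • u y‖ ≤ g (x - y) := fun y hy =>
    calc ‖k (x - y) • u y‖ ≤ ‖k (x - y)‖ * ‖u y‖ := norm_smul_le _ _
      _ ≤ ‖k (x - y)‖ * (S * Real.exp (r * y)) := by gcongr; exact hu y hy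
      _ = g (x - y) := by
        have hexp : Real.exp (r * y) = Real.exp (-(r * (x - y))) * Real.exp (r * x) := by
          rw [← Real.exp_add]; ring_nf
        simp only [g, hexp]; ring
  calc ‖causalConvolution k u x‖ ≤ ∫ y in 0..x, g (x - y) :=
        intervalIntegral.norm_integral_le_of_norm_le hx (.of_forall hbound)
          (intervalIntegrable_comp_sub_left_of_zero_left hg)
    _ = ∫ s in 0..x, g s := by
        rw [intervalIntegral.integral_comp_sub_left, sub_self, sub_zero]
    _ = truncLaplaceNorm k r x * (S * Real.exp (r * x)) :=
        intervalIntegral.integral_mul_const _ _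

theorem norm_le_pow_mul_exp_of_eq_causalConvolution {T M r : ℝ}
    (hk : IntervalIntegrable k volume 0 T) (hr : 0 ≤ r)
    (hu_bdd : ∀ x ∈ Icc 0 T, ‖u x‖ ≤ M)
    (hu : ∀ x ∈ Icc 0 T, u x = causalConvolution k u x) (n : ℕ) :
    ∀ x ∈ Icc 0 T, ‖u x‖ ≤ truncLaplaceNorm k r T ^ n * M * Real.exp (r * x) := by
  set q := truncLaplaceNorm k r T
  induction n with
  | zero =>
    intro x hx
    rw [pow_zero, one_mul]
    exact (hu_bdd x hx).trans (le_mul_of_one_le_right ((norm_nonneg _).trans (hu_bdd x hx))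
      (Real.one_le_exp (mul_nonneg hr hx.1)))
  | succ n ih =>
    intro x hx
    have hM : 0 ≤ M := (norm_nonneg _).trans (hu_bdd x hx)
    have hq_nonneg : 0 ≤ q := truncLaplaceNorm_nonneg k r (hx.1.trans hx.2)
    have hk_x : IntervalIntegrable k volume 0 x :=
      hk.mono_set (uIcc_subset_uIcc_left (Icc_subset_uIcc hx))
    calc ‖u x‖ = ‖causalConvolution k u x‖ := by rw [← hu x hx]
      _ ≤ truncLaplaceNorm k r x * (q ^ n * M * Real.exp (r * x)) :=
        norm_causalConvolution_le_exp hx.1 hk_x fun y hy => ih y ⟨hy.1.le, hy.2.trans hx.2⟩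
      _ ≤ q * (q ^ n * M * Real.exp (r * x)) := by
        gcongr
        exact truncLaplaceNorm_le_of_le r hx.1 hx.2 hk
      _ = q ^ (n + 1) * M * Real.exp (r * x) := by ring

theorem eqOn_zero_of_eq_causalConvolution {T : ℝ} (hk : IntervalIntegrable k volume 0 T)
    (hu_bdd : ∃ M, ∀ x ∈ Icc 0 T, ‖u x‖ ≤ M)
    (hu : ∀ x ∈ Icc 0 T, u x = causalConvolution k u x) : EqOn u 0 (Icc 0 T) := by
  intro x hx
  have hT : 0 ≤ T := hx.1.trans hx.2
  obtain ⟨M, hM⟩ := hu_bdd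
  obtain ⟨r, hr, hq⟩ := ((eventually_ge_atTop 0).and
    ((tendsto_truncLaplaceNorm_atTop hT hk).eventually_lt_const one_pos)).exists
  have hlim := ((tendsto_pow_atTop_nhds_zero_of_lt_one
    (truncLaplaceNorm_nonneg k r hT) hq).mul_const M).mul_const (Real.exp (r * x))
  rw [zero_mul, zero_mul] at hlim
  exact norm_le_zero_iff.1 (ge_of_tendsto' hlim fun n =>
    norm_le_pow_mul_exp_of_eq_causalConvolution hk hr hM hu n x hx)

theorem renewal_equation_unique_solution_general [CompleteSpace E] {T : ℝ}
    {φ ξ₁ ξ₂ : ℝ → E} (hk : IntervalIntegrable k volume 0 T)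
    (hξ₁_meas : AEStronglyMeasurable ξ₁ (volume.restrict (Ioc 0 T)))
    (hξ₂_meas : AEStronglyMeasurable ξ₂ (volume.restrict (Ioc 0 T)))
    (hξ₁_bdd : ∃ M, ∀ x ∈ Icc 0 T, ‖ξ₁ x‖ ≤ M) (hξ₂_bdd : ∃ M, ∀ x ∈ Icc 0 T, ‖ξ₂ x‖ ≤ M)
    (h₁ : ∀ x ∈ Icc 0 T, ξ₁ x = causalConvolution k ξ₁ x + φ x)
    (h₂ : ∀ x ∈ Icc 0 T, ξ₂ x = causalConvolution k ξ₂ x + φ x) :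
    EqOn ξ₁ ξ₂ (Icc 0 T) := by
  have hint {ξ : ℝ → E} (hξ : AEStronglyMeasurable ξ (volume.restrict (Ioc 0 T)))
      (hξ_bdd : ∃ M, ∀ x ∈ Icc 0 T, ‖ξ x‖ ≤ M) (x : ℝ) (hx : x ∈ Icc 0 T) :
      IntervalIntegrable (fun y => k (x - y) • ξ y) volume 0 x := by
    have hsub : uIoc 0 x ⊆ Ioc 0 T := uIoc_of_le hx.1 ▸ Ioc_subset_Ioc_right hx.2
    exact intervalIntegrable_comp_sub_left_smul
      (hk.mono_set (uIcc_subset_uIcc_left (Icc_subset_uIcc hx))) (hξ.mono_set hsub)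
      (hξ_bdd.imp fun M hM y hy => hM y (Ioc_subset_Icc_self (hsub hy)))
  have hdiff : ∀ x ∈ Icc 0 T, (ξ₁ - ξ₂) x = causalConvolution k (ξ₁ - ξ₂) x := fun x hx => by
    rw [causalConvolution_sub (hint hξ₁_meas hξ₁_bdd x hx) (hint hξ₂_meas hξ₂_bdd x hx),
      Pi.sub_apply, h₁ x hx, h₂ x hx, add_sub_add_right_eq_sub]
  have hdiff_bdd : ∃ M, ∀ x ∈ Icc 0 T, ‖(ξ₁ - ξ₂) x‖ ≤ M := by
    obtain ⟨M₁, hM₁⟩ := hξ₁_bdd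
    obtain ⟨M₂, hM₂⟩ := hξ₂_bdd
    exact ⟨M₁ + M₂, fun x hx => norm_sub_le_of_le (hM₁ x hx) (hM₂ x hx)⟩
  exact fun x hx => sub_eq_zero.1 (eqOn_zero_of_eq_causalConvolution hk hdiff_bdd hdiff hx)

end CausalConvolution

/-- Uniqueness of locally bounded measurable solutions of the renewal
(Volterra convolution) equation `ξ(x) = ∫_0^x k(x-y) ξ(y) dy + φ(x)`. -/
theorem renewal_equation_unique_solution
    (k φ ξ₁ ξ₂ : ℝ → ℝ)
    (hk_meas : Measurable k) (hφ_meas : Measurable φ)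
    (hk_zero : ∀ u ≤ 0, k u = 0) (hφ_zero : ∀ u ≤ 0, φ u = 0)
    (hk_bdd : ∀ a b : ℝ, ∃ M : ℝ, ∀ u ∈ Set.Icc a b, |k u| ≤ M)
    (hφ_bdd : ∀ a b : ℝ, ∃ M : ℝ, ∀ u ∈ Set.Icc a b, |φ u| ≤ M)
    (hξ₁_meas : Measurable ξ₁) (hξ₂_meas : Measurable ξ₂)
    (hξ₁_zero : ∀ u ≤ 0, ξ₁ u = 0) (hξ₂_zero : ∀ u ≤ 0, ξ₂ u = 0)
    (hξ₁_bdd : ∀ a b : ℝ, ∃ M : ℝ, ∀ u ∈ Set.Icc a b, |ξ₁ u| ≤ M)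
    (hξ₂_bdd : ∀ a b : ℝ, ∃ M : ℝ, ∀ u ∈ Set.Icc a b, |ξ₂ u| ≤ M)
    (h₁ : ∀ x, 0 ≤ x → ξ₁ x = (∫ y in (0 : ℝ)..x, k (x - y) * ξ₁ y) + φ x)
    (h₂ : ∀ x, 0 ≤ x → ξ₂ x = (∫ y in (0 : ℝ)..x, k (x - y) * ξ₂ y) + φ x) :
    ∀ x, ξ₁ x = ξ₂ x := by
  intro x
  rcases le_total x 0 with hx | hx
  · rw [hξ₁_zero x hx, hξ₂_zero x hx]
  · have hk : IntervalIntegrable k volume 0 x :=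
      intervalIntegrable_of_aestronglyMeasurable_of_norm_le hk_meas.aestronglyMeasurable
        ((hk_bdd 0 x).imp fun M hM y hy => hM y (Ioc_subset_Icc_self (uIoc_of_le hx ▸ hy)))
    exact renewal_equation_unique_solution_general hk hξ₁_meas.aestronglyMeasurable
      hξ₂_meas.aestronglyMeasurable (hξ₁_bdd 0 x) (hξ₂_bdd 0 x) (fun y hy => h₁ y hy.1)
      (fun y hy => h₂ y hy.1) ⟨hx, le_rfl⟩
end

section
/- Let c > 0, a ∈ ℝ, y ∈ ℝ with a < y, and let J : [0,∞) → ℝ be nondecreasing, right-continuous, with J(0) = 0. Define g(t) = a + c t − J(t) and τ = inf{ t ≥ 0 : g(t) ≥ y }. If the set { t ≥ 0 : g(t) ≥ y } is nonempty, then g(τ) = y; that is, a path with positive drift and only downward (nonincreasing-part) discontinuities can only cross an upper level continuously. -/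
/-!
At the infimum `τ` of the times at which a path is at or above `y`, only two one-sided limits
matter. Such times accumulate at `τ` from the right, so if the path does not jump up just after
`τ`, its value there is at least `y`. Just before `τ` the path is below `y`, so if it does not jump
up at `τ`, its value there is at most `y`. "Not jumping up" is upper semicontinuity from the right
together with lower semicontinuity from the left, which every antitone function has and which is
kept when a continuous drift is added.
-/

open Set Filter Topology

section Antitone

variable {α β : Type*} [TopologicalSpace α] [Preorder α] [Preorder β]
  {f : α → β} {s : Set α} {x : α}

lemma upperSemicontinuousWithinAt_inter_Ici_of_antitoneOn (hf : AntitoneOn f s) (hx : x ∈ s) :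
    UpperSemicontinuousWithinAt f (s ∩ Ici x) x := fun _ hy ↦
  eventually_mem_nhdsWithin.mono fun _ ht ↦ (hf hx ht.1 ht.2).trans_lt hy

lemma lowerSemicontinuousWithinAt_inter_Iic_of_antitoneOn (hf : AntitoneOn f s) (hx : x ∈ s) :
    LowerSemicontinuousWithinAt f (s ∩ Iic x) x := fun _ hy ↦
  eventually_mem_nhdsWithin.mono fun _ ht ↦ lt_of_lt_of_le hy (hf ht.1 hx ht.2)

end Antitone

section ContinuousSubMonotone

variable {α β : Type*} [TopologicalSpace α] [Preorder α]
  [AddCommGroup β] [LinearOrder β] [IsOrderedAddMonoid β] [TopologicalSpace β] [OrderTopology β]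
  {d J : α → β} {s : Set α} {x : α}

lemma upperSemicontinuousWithinAt_sub_of_monotoneOn (hd : ContinuousWithinAt d s x)
    (hJ : MonotoneOn J s) (hx : x ∈ s) :
    UpperSemicontinuousWithinAt (d - J) (s ∩ Ici x) x := by
  rw [sub_eq_add_neg]
  exact (hd.mono inter_subset_left).upperSemicontinuousWithinAt.add
    (upperSemicontinuousWithinAt_inter_Ici_of_antitoneOn hJ.neg hx)

lemma lowerSemicontinuousWithinAt_sub_of_monotoneOn (hd : ContinuousWithinAt d s x)
    (hJ : MonotoneOn J s) (hx : x ∈ s) :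
    LowerSemicontinuousWithinAt (d - J) (s ∩ Iic x) x := by
  rw [sub_eq_add_neg]
  exact (hd.mono inter_subset_left).lowerSemicontinuousWithinAt.add
    (lowerSemicontinuousWithinAt_inter_Iic_of_antitoneOn hJ.neg hx)

end ContinuousSubMonotone

/-- The first passage time `τ_y^+` of the path `f`, started at time `t₀`, at or above the level `y`.
It is a meaningful time only if the level is reached: the infimum of the empty set is a junk
value. -/
def firstPassageTime {α β : Type*} [LE α] [InfSet α] [LE β] (f : α → β) (t₀ : α) (y : β) : α :=
  sInf {t | t₀ ≤ t ∧ y ≤ f t}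

section FirstPassageTime

variable {α β : Type*} {f : α → β} {t₀ t : α} {y : β}

section Lattice

variable [ConditionallyCompleteLattice α] [LE β]

lemma isGLB_firstPassageTime (hne : {t | t₀ ≤ t ∧ y ≤ f t}.Nonempty) :
    IsGLB {t | t₀ ≤ t ∧ y ≤ f t} (firstPassageTime f t₀ y) :=
  isGLB_csInf hne ⟨t₀, fun _ ht ↦ ht.1⟩

lemma le_firstPassageTime (hne : {t | t₀ ≤ t ∧ y ≤ f t}.Nonempty) :
    t₀ ≤ firstPassageTime f t₀ y :=
  le_csInf hne fun _ ht ↦ ht.1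

end Lattice

variable [ConditionallyCompleteLinearOrder α] [LinearOrder β]

lemma apply_lt_of_lt_firstPassageTime (ht₀ : t₀ ≤ t) (ht : t < firstPassageTime f t₀ y) :
    f t < y :=
  not_le.1 fun hy ↦ notMem_of_lt_csInf ht ⟨t₀, fun _ hs ↦ hs.1⟩ ⟨ht₀, hy⟩

variable [TopologicalSpace α] [OrderTopology α]

lemma le_apply_firstPassageTime (hne : {t | t₀ ≤ t ∧ y ≤ f t}.Nonempty)
    (hf : UpperSemicontinuousWithinAt f (Ici (firstPassageTime f t₀ y)) (firstPassageTime f t₀ y)) :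
    y ≤ f (firstPassageTime f t₀ y) :=
  hf.frequently y <| ((isGLB_firstPassageTime hne).frequently_mem hne).mono fun _ ht ↦ ht.2

lemma apply_firstPassageTime_le [DenselyOrdered α]
    (hne : {t | t₀ ≤ t ∧ y ≤ f t}.Nonempty) (hstart : f t₀ ≤ y)
    (hf : LowerSemicontinuousWithinAt f (Ico t₀ (firstPassageTime f t₀ y))
      (firstPassageTime f t₀ y)) :
    f (firstPassageTime f t₀ y) ≤ y := by
  rcases (le_firstPassageTime hne).eq_or_lt with heq | hlt
  · rwa [← heq]
  · have := right_nhdsWithin_Ico_neBot hlt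
    have hbefore : ∀ᶠ t in 𝓝[Ico t₀ (firstPassageTime f t₀ y)] firstPassageTime f t₀ y, f t ≤ y :=
      eventually_mem_nhdsWithin.mono fun _ ht ↦ (apply_lt_of_lt_firstPassageTime ht.1 ht.2).le
    exact hf.frequently y hbefore.frequently

end FirstPassageTime

theorem drift_minus_jumps_crosses_level_continuously_general {α β : Type*}
    [ConditionallyCompleteLinearOrder α] [DenselyOrdered α] [TopologicalSpace α] [OrderTopology α]
    [AddCommGroup β] [LinearOrder β] [IsOrderedAddMonoid β] [TopologicalSpace β] [OrderTopology β]
    {d J : α → β} {t₀ : α} {y : β} (hd : ContinuousOn d (Ici t₀)) (hJ : MonotoneOn J (Ici t₀))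
    (hstart : (d - J) t₀ ≤ y) (hne : {t | t₀ ≤ t ∧ y ≤ (d - J) t}.Nonempty) :
    (d - J) (firstPassageTime (d - J) t₀ y) = y := by
  have hτ : firstPassageTime (d - J) t₀ y ∈ Ici t₀ := le_firstPassageTime hne
  have hleft := lowerSemicontinuousWithinAt_sub_of_monotoneOn (hd _ hτ) hJ hτ
  have hright := upperSemicontinuousWithinAt_sub_of_monotoneOn (hd _ hτ) hJ hτ
  apply le_antisymm
  · exact apply_firstPassageTime_le hne hstart <| hleft.mono fun _ ht ↦ ⟨ht.1, ht.2.le⟩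
  · exact le_apply_firstPassageTime hne <| hright.mono fun _ ht ↦ ⟨le_trans hτ ht, ht⟩

/-- A deterministic path with positive drift and only downward (nonincreasing-part)
jumps can only cross an upper level continuously: if `g(t) = a + c t - J(t)` with
`J` nondecreasing and right-continuous on `[0, ∞)`, `J(0) = 0`, `a < y`, and `g`
reaches the level `y`, then `g` equals `y` at the first passage time. -/
theorem drift_minus_jumps_crosses_level_continuously
    (c a y : ℝ) (hc : 0 < c) (hay : a < y)
    (J : ℝ → ℝ)
    (hJ_mono : MonotoneOn J (Set.Ici 0))
    (hJ_rc : ∀ t, 0 ≤ t → ContinuousWithinAt J (Set.Ici t) t)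
    (hJ_zero : J 0 = 0)
    (g : ℝ → ℝ) (hg : ∀ t, g t = a + c * t - J t)
    (hne : {t : ℝ | 0 ≤ t ∧ y ≤ g t}.Nonempty) :
    g (sInf {t : ℝ | 0 ≤ t ∧ y ≤ g t}) = y := by
  obtain rfl : g = fun t ↦ a + c * t - J t := funext hg
  exact drift_minus_jumps_crosses_level_continuously_general (d := fun t ↦ a + c * t)
    (by fun_prop) hJ_mono (by simpa [hJ_zero] using hay.le) hne
end

section
/- Let λ, q, c > 0, r ∈ (0,1], let f be a continuous probability density on (0,∞) (vanishing on (−∞,0]), and let ρ be the unique nonnegative root of c s − (λ + q) + λ r f̂(s) = 0. Then for every y > 0, e^{−(λ+q) y / c} + Σ_{k=1}^∞ r^k (λ^k / k!) · y · ∫_{y/c}^∞ e^{−q t} t^{k−1} e^{−λ t} f^{*k}(c t − y) dt = e^{−ρ y}, where f^{*k} is the k-fold convolution of f (extended by 0 on (−∞,0]). -/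
open MeasureTheory

/-!
After scaling time so that the drift is `1`, and replacing `f` by the tilted measure
`κ(dx) = e^{-αx} b f(x) dx` with `α = (λ + q) / c` and `b = λ r / c`, the identity becomes
`∑ₙ ∫ y (y + z)^(n-1) / n! κ^{∗n}(dz) = e^{θy}`, where `θ = α - ρ` solves `θ = ∫ e^{θx} κ(dx)`.

The `n`-th term is the `n`-th Picard iterate of the advance equation `φ' = ∫ φ(· + x) κ(dx)`,
`φ(0) = 1`: the derivative of an Abel polynomial is the preceding one with `y` shifted by the mean
of the `n` summands of `z`, and by exchangeability this mean may be traded for a single summand.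
The function `e^{θy}` solves the same equation, so the partial sums miss it by an iterate of the
Picard operator. That operator contracts `e^{αy}` by the factor `α⁻¹ ∫ e^{αx} κ(dx) < 1`, and
`e^{θy} ≤ e^{αy}`, so the error tends to `0`.
-/

open scoped ENNReal

section ConvolutionPowers

/-- The `n`-fold convolution power `κ^{∗n}` of a measure, with `κ^{∗0} = δ₀`. -/
noncomputable def convPow {M : Type*} [AddMonoid M] [MeasurableSpace M] (κ : Measure M) :
    ℕ → Measure M
  | 0 => Measure.dirac 0
  | n + 1 => κ ∗ convPow κ n

instance sFinite_convPow {M : Type*} [AddMonoid M] [MeasurableSpace M] (κ : Measure M) [SFinite κ]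
    (n : ℕ) : SFinite (convPow κ n) := by
  induction n with
  | zero => exact inferInstanceAs (SFinite (Measure.dirac 0))
  | succ n ih => exact Measure.sfinite_conv_of_sfinite κ (convPow κ n)

/-- The size-biased measure `x⁺ μ(dx)`; on measures carried by `[0, ∞)` it is a derivation for
convolution. -/
noncomputable def sizeBias (μ : Measure ℝ) : Measure ℝ :=
  μ.withDensity ENNReal.ofReal

instance sFinite_sizeBias (μ : Measure ℝ) [SFinite μ] : SFinite (sizeBias μ) :=
  inferInstanceAs (SFinite (μ.withDensity _))

lemma lintegral_sizeBias (μ : Measure ℝ) {φ : ℝ → ℝ≥0∞} (hφ : Measurable φ) :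
    ∫⁻ x, φ x ∂sizeBias μ = ∫⁻ x, ENNReal.ofReal x * φ x ∂μ :=
  lintegral_withDensity_eq_lintegral_mul μ ENNReal.measurable_ofReal hφ

lemma sizeBias_conv {μ ν : Measure ℝ} [SFinite μ] [SFinite ν] (hμ : ∀ᵐ x ∂μ, 0 ≤ x)
    (hν : ∀ᵐ x ∂ν, 0 ≤ x) : sizeBias (μ ∗ ν) = sizeBias μ ∗ ν + μ ∗ sizeBias ν := by
  refine Measure.ext_of_lintegral _ fun φ hφ ↦ ?_
  rw [lintegral_add_measure, lintegral_sizeBias _ hφ, Measure.lintegral_conv hφ,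
    Measure.lintegral_conv hφ, Measure.lintegral_conv (by fun_prop),
    lintegral_sizeBias _ (by fun_prop), ← lintegral_add_left (by fun_prop)]
  refine lintegral_congr_ae ?_
  filter_upwards [hμ] with x hx
  rw [lintegral_sizeBias _ (by fun_prop), ← lintegral_const_mul _ (by fun_prop),
    ← lintegral_add_left (by fun_prop)]
  refine lintegral_congr_ae ?_
  filter_upwards [hν] with z hz
  rw [ENNReal.ofReal_add hx hz, add_mul]

variable {κ : Measure ℝ}

lemma ae_convPow_nonneg (hκ : ∀ᵐ x ∂κ, 0 ≤ x) (n : ℕ) : ∀ᵐ x ∂convPow κ n, 0 ≤ x := by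
  induction n with
  | zero => exact (ae_dirac_iff measurableSet_Ici).2 le_rfl
  | succ n ih =>
    refine (ae_map_iff (by fun_prop) measurableSet_Ici).2 ?_
    filter_upwards [Measure.quasiMeasurePreserving_fst.ae hκ,
      Measure.quasiMeasurePreserving_snd.ae ih] with z hz₁ hz₂ using add_nonneg hz₁ hz₂

variable [SFinite κ]

lemma lintegral_convPow_succ (n : ℕ) {φ : ℝ → ℝ≥0∞} (hφ : Measurable φ) :
    ∫⁻ s, φ s ∂convPow κ (n + 1) = ∫⁻ x, ∫⁻ z, φ (x + z) ∂convPow κ n ∂κ :=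
  Measure.lintegral_conv hφ

lemma sizeBias_convPow_succ (hκ : ∀ᵐ x ∂κ, 0 ≤ x) (n : ℕ) :
    sizeBias (convPow κ (n + 1)) = ((n + 1 : ℕ) : ℝ≥0∞) • (sizeBias κ ∗ convPow κ n) := by
  induction n with
  | zero => simp [convPow]
  | succ n ih =>
    calc sizeBias (κ ∗ convPow κ (n + 1))
        = sizeBias κ ∗ convPow κ (n + 1)
            + κ ∗ (((n + 1 : ℕ) : ℝ≥0∞) • (sizeBias κ ∗ convPow κ n)) := by
          rw [sizeBias_conv hκ (ae_convPow_nonneg hκ _), ih]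
      _ = sizeBias κ ∗ convPow κ (n + 1)
            + ((n + 1 : ℕ) : ℝ≥0∞) • (sizeBias κ ∗ convPow κ (n + 1)) := by
          rw [Measure.conv_smul_right, ← Measure.conv_assoc, Measure.conv_comm κ,
            Measure.conv_assoc, convPow]
      _ = ((n + 1 + 1 : ℕ) : ℝ≥0∞) • (sizeBias κ ∗ convPow κ (n + 1)) := by
          rw [Nat.cast_succ (n + 1), add_smul, one_smul, add_comm]

/-- By exchangeability, a factor affine in one of `n + 1` summands may be evaluated at the mean of
the summands. -/
lemma lintegral_ofReal_add_mul_convPow (hκ : ∀ᵐ x ∂κ, 0 ≤ x) (n : ℕ) {u : ℝ} (hu : 0 ≤ u)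
    {φ : ℝ → ℝ≥0∞} (hφ : Measurable φ) :
    ∫⁻ x, ENNReal.ofReal (u + x) * ∫⁻ z, φ (x + z) ∂convPow κ n ∂κ
      = ∫⁻ s, ENNReal.ofReal (u + s / (n + 1)) * φ s ∂convPow κ (n + 1) := by
  have sizeBias_mean : ∫⁻ x, ENNReal.ofReal x * ∫⁻ z, φ (x + z) ∂convPow κ n ∂κ
      = ∫⁻ s, ENNReal.ofReal (s / (n + 1)) * φ s ∂convPow κ (n + 1) := by
    have hdiv (s : ℝ) : ENNReal.ofReal (s / (n + 1)) * φ s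
        = ((n + 1 : ℕ) : ℝ≥0∞)⁻¹ * (ENNReal.ofReal s * φ s) := by
      rw [ENNReal.ofReal_div_of_pos (by positivity), ← Nat.cast_succ, ENNReal.ofReal_natCast,
        div_eq_mul_inv, mul_comm (ENNReal.ofReal s), mul_assoc]
    simp_rw [hdiv]
    rw [lintegral_const_mul _ (by fun_prop), ← lintegral_sizeBias _ hφ, sizeBias_convPow_succ hκ,
      lintegral_smul_measure, smul_eq_mul, ← mul_assoc,
      ENNReal.inv_mul_cancel (by simp) (ENNReal.natCast_ne_top _), one_mul,
      Measure.lintegral_conv hφ, lintegral_sizeBias _ (by fun_prop)]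
  calc ∫⁻ x, ENNReal.ofReal (u + x) * ∫⁻ z, φ (x + z) ∂convPow κ n ∂κ
      = ∫⁻ x, (ENNReal.ofReal u * ∫⁻ z, φ (x + z) ∂convPow κ n
          + ENNReal.ofReal x * ∫⁻ z, φ (x + z) ∂convPow κ n) ∂κ := by
        refine lintegral_congr_ae ?_
        filter_upwards [hκ] with x hx
        rw [ENNReal.ofReal_add hu hx, add_mul]
    _ = ∫⁻ s, (ENNReal.ofReal u * φ s + ENNReal.ofReal (s / (n + 1)) * φ s)
          ∂convPow κ (n + 1) := by
        rw [lintegral_add_left (by fun_prop), lintegral_add_left (by fun_prop), sizeBias_mean,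
          lintegral_const_mul _ (by fun_prop), lintegral_const_mul _ hφ,
          lintegral_convPow_succ n hφ]
    _ = ∫⁻ s, ENNReal.ofReal (u + s / (n + 1)) * φ s ∂convPow κ (n + 1) := by
        refine lintegral_congr_ae ?_
        filter_upwards [ae_convPow_nonneg hκ (n + 1)] with s hs
        rw [ENNReal.ofReal_add hu (by positivity), add_mul]

end ConvolutionPowers

lemma setLIntegral_Ioc_ofReal_of_hasDerivAt {g g' : ℝ → ℝ} {a b : ℝ} (hab : a ≤ b)
    (hderiv : ∀ x, HasDerivAt g (g' x) x) (hcont : Continuous g')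
    (hnonneg : ∀ x ∈ Set.Ioc a b, 0 ≤ g' x) :
    ∫⁻ x in Set.Ioc a b, ENNReal.ofReal (g' x) = ENNReal.ofReal (g b - g a) := by
  rw [← ofReal_integral_eq_lintegral_ofReal (hcont.intervalIntegrable a b).1
      (ae_restrict_of_forall_mem measurableSet_Ioc hnonneg),
    ← intervalIntegral.integral_of_le hab,
    intervalIntegral.integral_eq_sub_of_hasDerivAt (fun x _ ↦ hderiv x)
      (hcont.intervalIntegrable a b)]

lemma ofReal_mul_setLIntegral_Ioc_exp {β y : ℝ} (hβ : 0 ≤ β) (hy : 0 ≤ y) :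
    ENNReal.ofReal β * ∫⁻ u in Set.Ioc 0 y, ENNReal.ofReal (Real.exp (β * u))
      = ENNReal.ofReal (Real.exp (β * y) - 1) := by
  have hderiv (u : ℝ) : HasDerivAt (fun u ↦ Real.exp (β * u)) (β * Real.exp (β * u)) u := by
    simpa only [mul_comm] using (hasDerivAt_const_mul β).exp
  rw [← lintegral_const_mul _ (by fun_prop)]
  simp_rw [← ENNReal.ofReal_mul hβ]
  rw [setLIntegral_Ioc_ofReal_of_hasDerivAt hy hderiv (by fun_prop) (fun u _ ↦ by positivity),
    mul_zero, Real.exp_zero]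

section AbelPolynomials

/-- The normalized Abel polynomial `y (y + z)^(n-1) / n!` in `y`, where `z` is the total of the `n`
shifts. -/
noncomputable def abelPoly : ℕ → ℝ → ℝ → ℝ
  | 0, _, _ => 1
  | n + 1, z, y => y * (z + y) ^ n / (n + 1).factorial

@[fun_prop]
lemma continuous_abelPoly (n : ℕ) {X : Type*} [TopologicalSpace X] {f g : X → ℝ}
    (hf : Continuous f) (hg : Continuous g) : Continuous fun x ↦ abelPoly n (f x) (g x) := by
  cases n <;> simp only [abelPoly] <;> fun_prop

lemma abelPoly_nonneg (n : ℕ) {z y : ℝ} (hz : 0 ≤ z) (hy : 0 ≤ y) : 0 ≤ abelPoly n z y := by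
  cases n <;> simp only [abelPoly] <;> positivity

/-- Abel's rule: differentiation lowers the degree and shifts `y` by the mean shift
`z / (n + 1)`. -/
lemma hasDerivAt_abelPoly_succ (n : ℕ) (z y : ℝ) :
    HasDerivAt (abelPoly (n + 1) z) (abelPoly n (z - z / (n + 1)) (y + z / (n + 1))) y := by
  have hderiv := ((hasDerivAt_id y).mul (((hasDerivAt_id y).const_add z).pow n)).div_const
    (n + 1).factorial
  refine hderiv.congr_deriv ?_
  cases n with
  | zero => simp [abelPoly]
  | succ n =>
    have htotal (w : ℝ) : z - w + (y + w) = z + y := by ring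
    simp only [abelPoly, id, Pi.pow_apply, Nat.factorial_succ (n + 1), Nat.add_sub_cancel, htotal]
    push_cast
    field_simp
    ring

/-- The `n`-th term of the Kendall series of `κ`, which is the `n`-th Picard iterate for
`φ' = ∫ φ(· + x) κ(dx)`, `φ(0) = 1`. -/
noncomputable def abelMoment (κ : Measure ℝ) (n : ℕ) (y : ℝ) : ℝ≥0∞ :=
  ∫⁻ z, ENNReal.ofReal (abelPoly n z y) ∂convPow κ n

variable {κ : Measure ℝ}

lemma abelMoment_zero (y : ℝ) : abelMoment κ 0 y = 1 := by
  simp [abelMoment, abelPoly, convPow]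

variable [SFinite κ]

lemma measurable_abelMoment (n : ℕ) : Measurable (abelMoment κ n) := by
  have : Measurable fun p : ℝ × ℝ ↦ ENNReal.ofReal (abelPoly n p.2 p.1) :=
    (continuous_abelPoly n continuous_snd continuous_fst).measurable.ennreal_ofReal
  exact this.lintegral_prod_right'

lemma lintegral_abelMoment_add (hκ : ∀ᵐ x ∂κ, 0 ≤ x) (n : ℕ) {u : ℝ} (hu : 0 ≤ u) :
    ∫⁻ x, abelMoment κ n (u + x) ∂κ
      = ∫⁻ s, ENNReal.ofReal (abelPoly n (s - s / (n + 1)) (u + s / (n + 1)))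
          ∂convPow κ (n + 1) := by
  cases n with
  | zero =>
    simp_rw [abelMoment_zero, abelPoly]
    rw [ENNReal.ofReal_one, lintegral_convPow_succ 0 measurable_const]
    simp [convPow]
  | succ n =>
    set φ : ℝ → ℝ≥0∞ := fun s ↦ ENNReal.ofReal ((s + u) ^ n / (n + 1).factorial)
    have hsplit {v w s : ℝ} (hv : 0 ≤ v) (hvw : w + v = s + u) :
        ENNReal.ofReal (abelPoly (n + 1) w v) = ENNReal.ofReal v * φ s := by
      rw [abelPoly, hvw, mul_div_assoc, ENNReal.ofReal_mul hv]
    calc ∫⁻ x, abelMoment κ (n + 1) (u + x) ∂κ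
        = ∫⁻ x, ENNReal.ofReal (u + x) * ∫⁻ z, φ (x + z) ∂convPow κ (n + 1) ∂κ := by
          refine lintegral_congr_ae ?_
          filter_upwards [hκ] with x hx
          rw [abelMoment, ← lintegral_const_mul _ (by fun_prop)]
          exact lintegral_congr fun z ↦ hsplit (add_nonneg hu hx) (by ring)
      _ = ∫⁻ s, ENNReal.ofReal (u + s / ((n + 1 : ℕ) + 1)) * φ s ∂convPow κ (n + 1 + 1) :=
          lintegral_ofReal_add_mul_convPow hκ (n + 1) hu (by fun_prop)
      _ = _ := by
          refine lintegral_congr_ae ?_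
          filter_upwards [ae_convPow_nonneg hκ (n + 1 + 1)] with s hs
          exact (hsplit (by positivity) (by ring)).symm

end AbelPolynomials

section PicardIteration

/-- The Picard operator `φ ↦ ∫₀^y ∫ φ(u + x) κ(dx) du` of the advance equation
`φ' = ∫ φ(· + x) κ(dx)`. -/
noncomputable def picard (κ : Measure ℝ) (φ : ℝ → ℝ≥0∞) (y : ℝ) : ℝ≥0∞ :=
  ∫⁻ u in Set.Ioc 0 y, ∫⁻ x, φ (u + x) ∂κ

variable {κ : Measure ℝ}

lemma picard_mono (hκ : ∀ᵐ x ∂κ, 0 ≤ x) {φ ψ : ℝ → ℝ≥0∞} (hle : ∀ y, 0 ≤ y → φ y ≤ ψ y) (y : ℝ) :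
    picard κ φ y ≤ picard κ ψ y := by
  refine setLIntegral_mono' measurableSet_Ioc fun u hu ↦ lintegral_mono_ae ?_
  filter_upwards [hκ] with x hx using hle _ (add_nonneg hu.1.le hx)

lemma picard_congr (hκ : ∀ᵐ x ∂κ, 0 ≤ x) {φ ψ : ℝ → ℝ≥0∞} (heq : ∀ y, 0 ≤ y → φ y = ψ y) (y : ℝ) :
    picard κ φ y = picard κ ψ y :=
  (picard_mono hκ (fun z hz ↦ (heq z hz).le) y).antisymm
    (picard_mono hκ (fun z hz ↦ (heq z hz).ge) y)

lemma picard_exp (β y : ℝ) :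
    picard κ (fun z ↦ ENNReal.ofReal (Real.exp (β * z))) y
      = (∫⁻ x, ENNReal.ofReal (Real.exp (β * x)) ∂κ)
          * ∫⁻ u in Set.Ioc 0 y, ENNReal.ofReal (Real.exp (β * u)) := by
  rw [picard, ← lintegral_const_mul _ (by fun_prop)]
  refine lintegral_congr fun u ↦ ?_
  simp_rw [mul_add, Real.exp_add, ENNReal.ofReal_mul (Real.exp_nonneg _)]
  rw [lintegral_const_mul _ (by fun_prop), mul_comm]

variable {θ α : ℝ}

lemma exp_eq_one_add_picard (hθ₀ : 0 ≤ θ)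
    (hθ : ∫⁻ x, ENNReal.ofReal (Real.exp (θ * x)) ∂κ = ENNReal.ofReal θ) {y : ℝ} (hy : 0 ≤ y) :
    ENNReal.ofReal (Real.exp (θ * y))
      = 1 + picard κ (fun z ↦ ENNReal.ofReal (Real.exp (θ * z))) y := by
  have one_le : 1 ≤ Real.exp (θ * y) := Real.one_le_exp (by positivity)
  rw [picard_exp, hθ, ofReal_mul_setLIntegral_Ioc_exp hθ₀ hy, ← ENNReal.ofReal_one,
    ← ENNReal.ofReal_add zero_le_one (sub_nonneg.2 one_le), add_sub_cancel]

variable [SFinite κ]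

lemma picard_add {φ : ℝ → ℝ≥0∞} (hφ : Measurable φ) (ψ : ℝ → ℝ≥0∞) (y : ℝ) :
    picard κ (fun z ↦ φ z + ψ z) y = picard κ φ y + picard κ ψ y := by
  simp only [picard]
  rw [← lintegral_add_left (by fun_prop)]
  exact lintegral_congr fun u ↦ lintegral_add_left (by fun_prop) _

lemma picard_const_mul (c : ℝ≥0∞) {φ : ℝ → ℝ≥0∞} (hφ : Measurable φ) (y : ℝ) :
    picard κ (fun z ↦ c * φ z) y = c * picard κ φ y := by
  simp only [picard]
  rw [← lintegral_const_mul _ (by fun_prop)]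
  exact lintegral_congr fun u ↦ lintegral_const_mul _ (by fun_prop)

lemma picard_abelMoment (hκ : ∀ᵐ x ∂κ, 0 ≤ x) (n : ℕ) {y : ℝ} (hy : 0 ≤ y) :
    picard κ (abelMoment κ n) y = abelMoment κ (n + 1) y := by
  have hmeas : Measurable fun p : ℝ × ℝ ↦
      ENNReal.ofReal (abelPoly n (p.2 - p.2 / (n + 1)) (p.1 + p.2 / (n + 1))) :=
    (by fun_prop : Continuous _).measurable.ennreal_ofReal
  rw [picard, setLIntegral_congr_fun measurableSet_Ioc
      fun u hu ↦ lintegral_abelMoment_add hκ n hu.1.le,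
    lintegral_lintegral_swap hmeas.aemeasurable]
  refine lintegral_congr_ae ?_
  filter_upwards [ae_convPow_nonneg hκ (n + 1)] with s hs
  have hmean : 0 ≤ s - s / (n + 1) :=
    sub_nonneg.2 (div_le_self hs (le_add_of_nonneg_left n.cast_nonneg))
  rw [setLIntegral_Ioc_ofReal_of_hasDerivAt hy (hasDerivAt_abelPoly_succ n s) (by fun_prop)
    fun u hu ↦ abelPoly_nonneg n hmean (add_nonneg hu.1.le (by positivity))]
  simp [abelPoly]

lemma iterate_picard_exp_eq (hκ : ∀ᵐ x ∂κ, 0 ≤ x) (hθ₀ : 0 ≤ θ)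
    (hθ : ∫⁻ x, ENNReal.ofReal (Real.exp (θ * x)) ∂κ = ENNReal.ofReal θ) (n : ℕ) :
    ∀ y, 0 ≤ y → (picard κ)^[n] (fun z ↦ ENNReal.ofReal (Real.exp (θ * z))) y
      = abelMoment κ n y + (picard κ)^[n + 1] (fun z ↦ ENNReal.ofReal (Real.exp (θ * z))) y := by
  induction n with
  | zero =>
    intro y hy
    rw [abelMoment_zero]
    exact exp_eq_one_add_picard hθ₀ hθ hy
  | succ n ih =>
    intro y hy
    rw [Function.iterate_succ_apply', picard_congr hκ ih, picard_add (measurable_abelMoment n),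
      picard_abelMoment hκ n hy, ← Function.iterate_succ_apply' (picard κ)]

lemma exp_eq_sum_abelMoment_add (hκ : ∀ᵐ x ∂κ, 0 ≤ x) (hθ₀ : 0 ≤ θ)
    (hθ : ∫⁻ x, ENNReal.ofReal (Real.exp (θ * x)) ∂κ = ENNReal.ofReal θ) {y : ℝ} (hy : 0 ≤ y)
    (N : ℕ) :
    ENNReal.ofReal (Real.exp (θ * y)) = ∑ n ∈ Finset.range N, abelMoment κ n y
      + (picard κ)^[N] (fun z ↦ ENNReal.ofReal (Real.exp (θ * z))) y := by
  induction N with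
  | zero => simp
  | succ N ih =>
    rw [Finset.sum_range_succ, add_assoc, ← iterate_picard_exp_eq hκ hθ₀ hθ N y hy, ← ih]

lemma iterate_picard_exp_le (hκ : ∀ᵐ x ∂κ, 0 ≤ x) (hα₀ : 0 ≤ α) (hθα : θ ≤ α) {C : ℝ≥0∞}
    (hC : ∫⁻ x, ENNReal.ofReal (Real.exp (α * x)) ∂κ ≤ C * ENNReal.ofReal α) (N : ℕ) :
    ∀ y, 0 ≤ y → (picard κ)^[N] (fun z ↦ ENNReal.ofReal (Real.exp (θ * z))) y
      ≤ C ^ N * ENNReal.ofReal (Real.exp (α * y)) := by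
  induction N with
  | zero =>
    intro y hy
    rw [pow_zero, one_mul]
    exact ENNReal.ofReal_le_ofReal (Real.exp_le_exp.2 (mul_le_mul_of_nonneg_right hθα hy))
  | succ N ih =>
    intro y hy
    calc (picard κ)^[N + 1] (fun z ↦ ENNReal.ofReal (Real.exp (θ * z))) y
        ≤ picard κ (fun z ↦ C ^ N * ENNReal.ofReal (Real.exp (α * z))) y := by
          rw [Function.iterate_succ_apply']
          exact picard_mono hκ ih y
      _ ≤ C ^ N * (C * ENNReal.ofReal α
            * ∫⁻ u in Set.Ioc 0 y, ENNReal.ofReal (Real.exp (α * u))) := by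
          rw [picard_const_mul _ (by fun_prop), picard_exp]
          gcongr
      _ = C ^ (N + 1) * ENNReal.ofReal (Real.exp (α * y) - 1) := by
          rw [mul_assoc C, ofReal_mul_setLIntegral_Ioc_exp hα₀ hy, pow_succ, mul_assoc]
      _ ≤ C ^ (N + 1) * ENNReal.ofReal (Real.exp (α * y)) := by
          gcongr
          exact sub_le_self _ zero_le_one

theorem tsum_abelMoment (hκ : ∀ᵐ x ∂κ, 0 ≤ x) (hθ₀ : 0 ≤ θ) (hθα : θ ≤ α)
    (hθ : ∫⁻ x, ENNReal.ofReal (Real.exp (θ * x)) ∂κ = ENNReal.ofReal θ)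
    (hα : ∫⁻ x, ENNReal.ofReal (Real.exp (α * x)) ∂κ < ENNReal.ofReal α) {y : ℝ} (hy : 0 ≤ y) :
    ∑' n, abelMoment κ n y = ENNReal.ofReal (Real.exp (θ * y)) := by
  have hα_ne : ENNReal.ofReal α ≠ 0 := (pos_of_gt hα).ne'
  set C := (∫⁻ x, ENNReal.ofReal (Real.exp (α * x)) ∂κ) / ENNReal.ofReal α
  have hC : C < 1 := (ENNReal.div_lt_iff (.inl hα_ne) (.inl ENNReal.ofReal_ne_top)).2 (by simpa)
  have hC_mul : ∫⁻ x, ENNReal.ofReal (Real.exp (α * x)) ∂κ ≤ C * ENNReal.ofReal α :=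
    (ENNReal.div_mul_cancel hα_ne ENNReal.ofReal_ne_top).ge
  have hbound : Filter.Tendsto (fun N ↦ C ^ N * ENNReal.ofReal (Real.exp (α * y)))
      Filter.atTop (nhds 0) := by
    simpa using ENNReal.Tendsto.mul_const (ENNReal.tendsto_pow_atTop_nhds_zero_of_lt_one hC)
      (.inr ENNReal.ofReal_ne_top)
  have hremainder := tendsto_of_tendsto_of_tendsto_of_le_of_le tendsto_const_nhds hbound
    (fun _ ↦ zero_le)
    (fun N ↦ iterate_picard_exp_le hκ (hθ₀.trans hθα) hθα hC_mul N y hy)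
  have hsum := (ENNReal.tendsto_nat_tsum fun n ↦ abelMoment κ n y).add hremainder
  simp_rw [← exp_eq_sum_abelMoment_add hκ hθ₀ hθ hy, add_zero] at hsum
  exact (tendsto_nhds_unique tendsto_const_nhds hsum).symm

end PicardIteration

section HalfLineDensities

/-- An integrable nonnegative function vanishing on `(-∞, 0]`: the density of a finite measure on
`(0, ∞)`. -/
structure IsHalfLineDensity (f : ℝ → ℝ) : Prop where
  nonneg : ∀ x, 0 ≤ f x
  eq_zero_of_nonpos : ∀ x ≤ 0, f x = 0
  integrable : Integrable f

/-- The measure `f(x) dx`. -/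
noncomputable def densityMeasure (f : ℝ → ℝ) : Measure ℝ :=
  volume.withDensity fun x ↦ ENNReal.ofReal (f x)

instance sFinite_densityMeasure (f : ℝ → ℝ) : SFinite (densityMeasure f) :=
  inferInstanceAs (SFinite (volume.withDensity _))

lemma nconv_const_mul (b : ℝ) (f : ℝ → ℝ) (n : ℕ) (x : ℝ) :
    nconv (fun x ↦ b * f x) n x = b ^ (n + 1) * nconv f n x := by
  induction n generalizing x with
  | zero => rw [zero_add, pow_one, nconv, nconv]
  | succ n ih =>
    simp only [nconv, conv, ih]
    rw [← intervalIntegral.integral_const_mul]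
    exact intervalIntegral.integral_congr fun y _ ↦ by ring

lemma nconv_exp_mul (s : ℝ) (f : ℝ → ℝ) (n : ℕ) (x : ℝ) :
    nconv (fun x ↦ Real.exp (s * x) * f x) n x = Real.exp (s * x) * nconv f n x := by
  induction n generalizing x with
  | zero => rfl
  | succ n ih =>
    simp only [nconv, conv, ih]
    rw [← intervalIntegral.integral_const_mul]
    refine intervalIntegral.integral_congr fun y _ ↦ ?_
    have hexp : Real.exp (s * x) = Real.exp (s * (x - y)) * Real.exp (s * y) := by
      rw [← Real.exp_add, ← mul_add, sub_add_cancel]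
    simp only [hexp]
    ring

namespace IsHalfLineDensity

variable {f g h : ℝ → ℝ}

lemma of_integrableOn (hf_nonneg : ∀ x, 0 ≤ f x) (hf_zero : ∀ x ≤ 0, f x = 0)
    (hf_int : IntegrableOn f (Set.Ioi 0)) : IsHalfLineDensity f where
  nonneg := hf_nonneg
  eq_zero_of_nonpos := hf_zero
  integrable := hf_int.integrable_of_forall_notMem_eq_zero fun x hx ↦ hf_zero x (not_lt.1 hx)

lemma indicator_eq (hf : IsHalfLineDensity f) : (Set.Ioi 0).indicator f = f :=
  Set.indicator_eq_self.2 fun _ hx ↦ not_le.1 (mt (hf.eq_zero_of_nonpos _) hx)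

lemma const_mul (hf : IsHalfLineDensity f) {b : ℝ} (hb : 0 ≤ b) :
    IsHalfLineDensity fun x ↦ b * f x where
  nonneg x := mul_nonneg hb (hf.nonneg x)
  eq_zero_of_nonpos x hx := by rw [hf.eq_zero_of_nonpos x hx, mul_zero]
  integrable := hf.integrable.const_mul b

lemma exp_mul (hf : IsHalfLineDensity f) {s : ℝ} (hs : s ≤ 0) :
    IsHalfLineDensity fun x ↦ Real.exp (s * x) * f x where
  nonneg x := mul_nonneg (Real.exp_nonneg _) (hf.nonneg x)
  eq_zero_of_nonpos x hx := by rw [hf.eq_zero_of_nonpos x hx, mul_zero]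
  integrable := by
    refine hf.integrable.mono' (.mul (by fun_prop) hf.integrable.aestronglyMeasurable)
      (.of_forall fun x ↦ ?_)
    rw [Real.norm_of_nonneg (mul_nonneg (Real.exp_nonneg _) (hf.nonneg x))]
    rcases le_total x 0 with hx | hx
    · rw [hf.eq_zero_of_nonpos x hx, mul_zero]
    · exact mul_le_of_le_one_left (hf.nonneg x)
        (Real.exp_le_one_iff.2 (mul_nonpos_of_nonpos_of_nonneg hs hx))

lemma conv_eq_posConvolution (hg : IsHalfLineDensity g) :
    conv g h = posConvolution h g (ContinuousLinearMap.mul ℝ ℝ) := by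
  funext x
  rcases le_or_gt x 0 with hx | hx
  · rw [posConvolution, Set.indicator_of_notMem (Set.notMem_Ioi.2 hx), conv,
      intervalIntegral.integral_of_ge hx, setIntegral_eq_zero_of_forall_eq_zero, neg_zero]
    intro y hy
    rw [hg.eq_zero_of_nonpos _ (by linarith [hy.1]), zero_mul]
  · rw [posConvolution, Set.indicator_of_mem (Set.mem_Ioi.2 hx)]
    simp only [conv, ContinuousLinearMap.mul_apply', mul_comm]

lemma conv_eq_convolution (hg : IsHalfLineDensity g) (hh : IsHalfLineDensity h) :
    conv g h = convolution h g (ContinuousLinearMap.mul ℝ ℝ) volume := by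
  have hindicator :=
    posConvolution_eq_convolution_indicator h g (ContinuousLinearMap.mul ℝ ℝ) volume
  rw [hg.conv_eq_posConvolution, hindicator, hg.indicator_eq, hh.indicator_eq]

protected lemma conv (hg : IsHalfLineDensity g) (hh : IsHalfLineDensity h) :
    IsHalfLineDensity (conv g h) where
  nonneg x := by
    rw [hg.conv_eq_convolution hh]
    exact integral_nonneg fun y ↦ mul_nonneg (hh.nonneg y) (hg.nonneg _)
  eq_zero_of_nonpos x hx := by
    rw [hg.conv_eq_posConvolution]
    exact Set.indicator_of_notMem (Set.notMem_Ioi.2 hx) _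
  integrable := by
    rw [hg.conv_eq_convolution hh]
    exact hh.integrable.integrable_convolution _ hg.integrable

protected lemma nconv (hf : IsHalfLineDensity f) (n : ℕ) : IsHalfLineDensity (nconv f n) := by
  induction n with
  | zero => exact hf
  | succ n ih => exact hf.conv ih

lemma ae_densityMeasure_nonneg (hf : IsHalfLineDensity f) : ∀ᵐ x ∂densityMeasure f, 0 ≤ x := by
  rw [densityMeasure, ae_withDensity_iff' hf.integrable.aemeasurable.ennreal_ofReal]
  refine .of_forall fun x hx ↦ ?_
  contrapose! hx
  rw [hf.eq_zero_of_nonpos x hx.le, ENNReal.ofReal_zero]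

lemma lintegral_densityMeasure (hf : IsHalfLineDensity f) {φ : ℝ → ℝ} (hφ : Measurable φ) :
    ∫⁻ x, ENNReal.ofReal (φ x) ∂densityMeasure f = ∫⁻ x, ENNReal.ofReal (φ x * f x) := by
  rw [densityMeasure, lintegral_withDensity_eq_lintegral_mul₀
    hf.integrable.aemeasurable.ennreal_ofReal (by fun_prop)]
  refine lintegral_congr fun x ↦ ?_
  rw [Pi.mul_apply, mul_comm, ENNReal.ofReal_mul' (hf.nonneg x)]

lemma toReal_lintegral_densityMeasure (hf : IsHalfLineDensity f) {φ : ℝ → ℝ} (hφ : Measurable φ)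
    (hφ_nonneg : ∀ x, 0 ≤ x → 0 ≤ φ x) :
    (∫⁻ x, ENNReal.ofReal (φ x) ∂densityMeasure f).toReal = ∫ x, φ x * f x := by
  have hmul_nonneg (x : ℝ) : 0 ≤ φ x * f x := by
    rcases le_total x 0 with hx | hx
    · rw [hf.eq_zero_of_nonpos x hx, mul_zero]
    · exact mul_nonneg (hφ_nonneg x hx) (hf.nonneg x)
  rw [hf.lintegral_densityMeasure hφ, integral_eq_lintegral_of_nonneg_ae (.of_forall hmul_nonneg)
    (hφ.aestronglyMeasurable.mul hf.integrable.aestronglyMeasurable)]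

lemma lintegral_exp_densityMeasure_exp_mul (hf : IsHalfLineDensity f) {s t : ℝ} (hs : s ≤ 0)
    (hst : t + s ≤ 0) :
    ∫⁻ x, ENNReal.ofReal (Real.exp (t * x)) ∂densityMeasure (fun x ↦ Real.exp (s * x) * f x)
      = ENNReal.ofReal (∫ x, Real.exp ((t + s) * x) * f x) := by
  rw [(hf.exp_mul hs).lintegral_densityMeasure (by fun_prop), ofReal_integral_eq_lintegral_ofReal
    (hf.exp_mul hst).integrable (.of_forall (hf.exp_mul hst).nonneg)]
  simp_rw [add_mul, Real.exp_add, mul_assoc]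

lemma densityMeasure_conv (hg : IsHalfLineDensity g) (hh : IsHalfLineDensity h) :
    densityMeasure (conv g h) = densityMeasure g ∗ densityMeasure h := by
  rw [Measure.conv_comm, densityMeasure, densityMeasure, densityMeasure,
    conv_withDensity_eq_mlconvolution₀ hh.integrable.aemeasurable.ennreal_ofReal
      hg.integrable.aemeasurable.ennreal_ofReal, hg.conv_eq_convolution hh]
  refine withDensity_congr_ae ?_
  filter_upwards [hh.integrable.ae_convolution_exists (ContinuousLinearMap.mul ℝ ℝ) hg.integrable]
    with x hx
  rw [convolution, lconvolution_def, ofReal_integral_eq_lintegral_ofReal hx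
    (.of_forall fun y ↦ mul_nonneg (hh.nonneg y) (hg.nonneg _))]
  refine lintegral_congr fun y ↦ ?_
  rw [ContinuousLinearMap.mul_apply', ENNReal.ofReal_mul (hh.nonneg y), neg_add_eq_sub]

lemma convPow_densityMeasure_succ (hf : IsHalfLineDensity f) (n : ℕ) :
    convPow (densityMeasure f) (n + 1) = densityMeasure (nconv f n) := by
  induction n with
  | zero => exact Measure.conv_dirac_zero _
  | succ n ih => rw [convPow, ih, nconv, hf.densityMeasure_conv (hf.nconv n)]

lemma setIntegral_Ioi_mul (hf : IsHalfLineDensity f) (φ : ℝ → ℝ) :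
    ∫ x in Set.Ioi 0, φ x * f x = ∫ x, φ x * f x :=
  setIntegral_eq_integral_of_forall_compl_eq_zero fun x hx ↦ by
    rw [hf.eq_zero_of_nonpos x (not_lt.1 hx), mul_zero]

lemma setIntegral_Ioi_mul_comp_mul_sub (hf : IsHalfLineDensity f) (φ : ℝ → ℝ) {c : ℝ} (hc : 0 < c)
    (y : ℝ) :
    ∫ t in Set.Ioi (y / c), φ t * f (c * t - y) = c⁻¹ * ∫ x, φ ((x + y) / c) * f x := by
  have hvanish (t : ℝ) (ht : t ∉ Set.Ioi (y / c)) : φ t * f (c * t - y) = 0 := by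
    have : c * t ≤ y := (le_div_iff₀' hc).1 (not_lt.1 ht)
    rw [hf.eq_zero_of_nonpos _ (sub_nonpos.2 this), mul_zero]
  calc ∫ t in Set.Ioi (y / c), φ t * f (c * t - y)
      = ∫ t, φ (c * t / c) * f (c * t - y) := by
        simp_rw [mul_div_cancel_left₀ _ hc.ne']
        exact setIntegral_eq_integral_of_forall_compl_eq_zero hvanish
    _ = c⁻¹ * ∫ v, φ (v / c) * f (v - y) := by
        rw [Measure.integral_comp_mul_left (fun v ↦ φ (v / c) * f (v - y)) c,
          abs_of_pos (inv_pos.2 hc), smul_eq_mul]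
    _ = c⁻¹ * ∫ x, φ ((x + y) / c) * f x := by
        rw [← integral_add_right_eq_self _ y]
        simp_rw [add_sub_cancel_right]

lemma toReal_abelMoment_succ (hf : IsHalfLineDensity f) (n : ℕ) {y : ℝ} (hy : 0 ≤ y) :
    (abelMoment (densityMeasure f) (n + 1) y).toReal
      = y / (n + 1).factorial * ∫ x, (x + y) ^ n * nconv f n x := by
  rw [abelMoment, hf.convPow_densityMeasure_succ,
    (hf.nconv n).toReal_lintegral_densityMeasure (by fun_prop : Continuous _).measurable
      fun x hx ↦ abelPoly_nonneg (n + 1) hx hy, ← integral_const_mul]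
  refine integral_congr_ae (.of_forall fun x ↦ ?_)
  simp only [abelPoly]
  ring

lemma tsum_abelMoment_exp_mul (hf : IsHalfLineDensity f) {α ρ : ℝ} (hmass : ∫ x, f x < α)
    (hρ : 0 ≤ ρ) (hroot : ρ + ∫ x, Real.exp (-ρ * x) * f x = α) {y : ℝ} (hy : 0 ≤ y) :
    ∑' n, abelMoment (densityMeasure fun x ↦ Real.exp (-α * x) * f x) n y
      = ENNReal.ofReal (Real.exp ((α - ρ) * y)) := by
  have hmass_nonneg : 0 ≤ ∫ x, f x := integral_nonneg hf.nonneg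
  have hα : -α ≤ 0 := neg_nonpos.2 (hmass_nonneg.trans hmass.le)
  have hlaplace_nonneg : 0 ≤ ∫ x, Real.exp (-ρ * x) * f x :=
    integral_nonneg (hf.exp_mul (neg_nonpos.2 hρ)).nonneg
  refine tsum_abelMoment (hf.exp_mul hα).ae_densityMeasure_nonneg
    (by linarith) (sub_le_self α hρ) ?_ ?_ hy
  · rw [hf.lintegral_exp_densityMeasure_exp_mul hα (by linarith),
      show α - ρ + -α = -ρ by ring, ← hroot, add_sub_cancel_left]
  · rw [hf.lintegral_exp_densityMeasure_exp_mul hα (add_neg_cancel α).le, add_neg_cancel]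
    simp_rw [zero_mul, Real.exp_zero, one_mul]
    exact (ENNReal.ofReal_lt_ofReal_iff_of_nonneg hmass_nonneg).2 hmass

/-- Kendall's identity at unit speed, with the arrival rate, the speed and the discount per summand
absorbed into `f`. -/
theorem hasSum_kendall (hf : IsHalfLineDensity f) {α ρ : ℝ} (hmass : ∫ x, f x < α) (hρ : 0 ≤ ρ)
    (hroot : ρ + ∫ x, Real.exp (-ρ * x) * f x = α) {y : ℝ} (hy : 0 ≤ y) :
    HasSum (fun n : ℕ ↦ y / (n + 1).factorial
        * ∫ x, Real.exp (-α * (x + y)) * (x + y) ^ n * nconv f n x)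
      (Real.exp (-ρ * y) - Real.exp (-α * y)) := by
  have hα : -α ≤ 0 := neg_nonpos.2 ((integral_nonneg hf.nonneg).trans hmass.le)
  set κ := densityMeasure fun x ↦ Real.exp (-α * x) * f x
  have htsum : ∑' n, abelMoment κ n y = ENNReal.ofReal (Real.exp ((α - ρ) * y)) :=
    hf.tsum_abelMoment_exp_mul hmass hρ hroot hy
  have hne_top : ∑' n, abelMoment κ n y ≠ ∞ := htsum ▸ ENNReal.ofReal_ne_top
  have hsum : HasSum (fun n ↦ (abelMoment κ n y).toReal) (Real.exp ((α - ρ) * y)) := by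
    rw [← ENNReal.toReal_ofReal (Real.exp_nonneg _), ← htsum,
      ENNReal.tsum_toReal_eq fun n ↦ ENNReal.ne_top_of_tsum_ne_top hne_top n]
    exact ENNReal.hasSum_toReal hne_top
  rw [← hasSum_nat_add_iff' 1, Finset.sum_range_one, abelMoment_zero, ENNReal.toReal_one] at hsum
  have hterm (n : ℕ) : y / (n + 1).factorial
        * ∫ x, Real.exp (-α * (x + y)) * (x + y) ^ n * nconv f n x
      = Real.exp (-α * y) * (abelMoment κ (n + 1) y).toReal := by
    rw [(hf.exp_mul hα).toReal_abelMoment_succ n hy, mul_left_comm,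
      ← integral_const_mul (Real.exp (-α * y))]
    refine congrArg (y / (n + 1).factorial * ·) (integral_congr_ae (.of_forall fun x ↦ ?_))
    simp only [nconv_exp_mul, mul_add, Real.exp_add]
    ring
  have hlimit : Real.exp (-ρ * y) - Real.exp (-α * y)
      = Real.exp (-α * y) * (Real.exp ((α - ρ) * y) - 1) := by
    rw [mul_sub, ← Real.exp_add, mul_one, ← add_mul, show -α + (α - ρ) = -ρ by ring]
  simp_rw [hterm, hlimit]
  exact hsum.mul_left _

lemma kendall_term_eq (hf : IsHalfLineDensity f) (lam q r : ℝ) {c : ℝ} (hc : 0 < c) (k : ℕ)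
    (y : ℝ) :
    r ^ (k + 1) * lam ^ (k + 1) / (Nat.factorial (k + 1) : ℝ) * y *
        ∫ t in Set.Ioi (y / c),
          Real.exp (-q * t) * t ^ k * Real.exp (-lam * t) * nconv f k (c * t - y)
      = y / (k + 1).factorial * ∫ x, Real.exp (-((lam + q) / c) * (x + y)) * (x + y) ^ k
          * nconv (fun x ↦ lam * r / c * f x) k x := by
  have hintegrand (x : ℝ) : Real.exp (-((lam + q) / c) * (x + y)) * (x + y) ^ k
        * nconv (fun x ↦ lam * r / c * f x) k x
      = (lam * r) ^ (k + 1) / c * (Real.exp (-q * ((x + y) / c)) * ((x + y) / c) ^ k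
          * Real.exp (-lam * ((x + y) / c)) * nconv f k x) := by
    have hexp : Real.exp (-((lam + q) / c) * (x + y))
        = Real.exp (-q * ((x + y) / c)) * Real.exp (-lam * ((x + y) / c)) := by
      rw [← Real.exp_add]
      ring_nf
    rw [nconv_const_mul, hexp, div_pow, div_pow, pow_succ c]
    field_simp
  rw [(hf.nconv k).setIntegral_Ioi_mul_comp_mul_sub
    (fun t ↦ Real.exp (-q * t) * t ^ k * Real.exp (-lam * t)) hc]
  simp_rw [hintegrand]
  rw [integral_const_mul]
  ring

end IsHalfLineDensity

end HalfLineDensities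

theorem discounted_kendall_identity_general {lam q c r ρ : ℝ} (hlam : 0 ≤ lam) (hc : 0 < c)
    (hr : 0 ≤ r) {f : ℝ → ℝ} (hf : IsHalfLineDensity f)
    (hmass : lam * r * ∫ x in Set.Ioi 0, f x < lam + q) (hρ_nonneg : 0 ≤ ρ)
    (hρ_root : c * ρ - (lam + q) + lam * r * laplace f ρ = 0) {y : ℝ} (hy : 0 ≤ y) :
    HasSum (fun k : ℕ ↦ r ^ (k + 1) * lam ^ (k + 1) / (Nat.factorial (k + 1) : ℝ) * y *
        ∫ t in Set.Ioi (y / c),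
          Real.exp (-q * t) * t ^ k * Real.exp (-lam * t) * nconv f k (c * t - y))
      (Real.exp (-ρ * y) - Real.exp (-(lam + q) * y / c)) := by
  simp_rw [hf.kendall_term_eq lam q r hc _ y]
  rw [show -(lam + q) * y / c = -((lam + q) / c) * y by ring]
  refine (hf.const_mul (b := lam * r / c) (by positivity)).hasSum_kendall ?_ hρ_nonneg ?_ hy
  · have htotal : ∫ x in Set.Ioi 0, f x = ∫ x, f x := by
      simpa only [one_mul] using hf.setIntegral_Ioi_mul fun _ ↦ 1
    rw [integral_const_mul, ← htotal, div_mul_eq_mul_div]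
    exact div_lt_div_of_pos_right hmass hc
  · rw [laplace, hf.setIntegral_Ioi_mul] at hρ_root
    simp_rw [mul_left_comm _ (lam * r / c)]
    rw [integral_const_mul, eq_div_iff hc.ne', add_mul, div_mul_eq_mul_div,
      div_mul_cancel₀ _ hc.ne']
    linarith

/-- Discounted Kendall-type identity:
`e^{-(λ+q)y/c} + Σ_{k≥1} r^k (λ^k/k!) y ∫_{y/c}^∞ e^{-qt} t^{k-1} e^{-λt} f^{*k}(ct-y) dt
  = e^{-ρ y}`, where `ρ` is the unique nonnegative Lundberg root. -/
theorem discounted_kendall_identity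
    (lam q c r ρ : ℝ) (hlam : 0 < lam) (hq : 0 < q) (hc : 0 < c)
    (hr : r ∈ Set.Ioc (0 : ℝ) 1)
    (f : ℝ → ℝ) (hf_meas : Measurable f) (hf_nonneg : ∀ x, 0 ≤ f x)
    (hf_zero : ∀ x ≤ 0, f x = 0) (hf_cont : ContinuousOn f (Set.Ioi 0))
    (hf_int : IntegrableOn f (Set.Ioi 0))
    (hf_one : ∫ x in Set.Ioi (0 : ℝ), f x = 1)
    (hρ_nonneg : 0 ≤ ρ)
    (hρ_root : c * ρ - (lam + q) + lam * r * laplace f ρ = 0)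
    (hρ_unique : ∀ s, 0 ≤ s → c * s - (lam + q) + lam * r * laplace f s = 0 → s = ρ)
    (y : ℝ) (hy : 0 < y) :
    Real.exp (-(lam + q) * y / c)
      + (∑' k : ℕ, r ^ (k + 1) * lam ^ (k + 1) / (Nat.factorial (k + 1) : ℝ) * y *
          ∫ t in Set.Ioi (y / c),
            Real.exp (-q * t) * t ^ k * Real.exp (-lam * t) * nconv f k (c * t - y))
      = Real.exp (-ρ * y) := by
  rw [(discounted_kendall_identity_general hlam.le hc hr.1.le (.of_integrableOn hf_nonneg hf_zero
    hf_int) (by rw [hf_one]; nlinarith [hr.2]) hρ_nonneg hρ_root hy.le).tsum_eq, add_sub_cancel]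
end

section
/- Let μ, λ, c, q > 0, r ∈ (0,1], d > 0 and x ∈ ℝ. Then ∫_0^∞ μ e^{−μ(y+x)} [ e^{−(λ+q) y / c} 1_{\{y ≤ c d\}} + ∫_0^d e^{−q t} Σ_{k=1}^∞ r^k (λ^k μ^k y)/(k!(k−1)!) · t^{k−1} (c t − y)^{k−1} 1_{\{c t > y\}} e^{−(λ+μ c) t} e^{μ y} dt ] dy = e^{−μ x} · Σ_{k=0}^∞ ( r^k λ^k (μ c)^{k+1} ) / ( k! (k+1)! ) ∫_0^d t^{2k} e^{−(λ+q+μ c) t} dt. -/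
open MeasureTheory

/-!
The sum over the number of claims is a Bessel–Clifford function `𝒞₁(z) = ∑ zᵏ / (k! (k + 1)!)`.
After exchanging the integrals in `y` and `t`, the inner integral runs over `0 < y < c t` and
`s ∫₀ᵃ y 𝒞₁(s (a - y)) dy = a (𝒞₁(s a) - 1)` evaluates it. The `-1` cancels exactly the contribution
of the paths without claims, once the latter is rewritten by the substitution `y = c t`, so that
`w_d(x) = e^{-μx} μ c ∫₀ᵈ e^{-(λ+q+μc)t} 𝒞₁(r λ μ c t²) dt`, which is then expanded termwise.
-/

open Set Function
open scoped Nat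

section EverywhereConvergentSeries

theorem continuous_tsum_mul_pow {𝕜 : Type*} [NormedField 𝕜] [CompleteSpace 𝕜] {a : ℕ → 𝕜}
    (ha : ∀ R : ℝ, Summable fun k ↦ ‖a k‖ * R ^ k) :
    Continuous fun z : 𝕜 ↦ ∑' k, a k * z ^ k := by
  refine continuous_iff_continuousAt.2 fun z ↦ ?_
  have h_ball : ContinuousOn (fun w : 𝕜 ↦ ∑' k, a k * w ^ k) (Metric.ball 0 (‖z‖ + 1)) := by
    refine continuousOn_tsum (fun k ↦ by fun_prop) (ha (‖z‖ + 1)) fun k w hw ↦ ?_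
    rw [norm_mul, norm_pow]
    gcongr
    exact (mem_ball_zero_iff.1 hw).le
  exact h_ball.continuousAt (Metric.isOpen_ball.mem_nhds (by simp))

theorem hasSum_intervalIntegral_mul_pow {𝕜 : Type*} [RCLike 𝕜] {a : ℕ → 𝕜}
    (ha : ∀ R : ℝ, Summable fun k ↦ ‖a k‖ * R ^ k) {w h : ℝ → 𝕜} (hw : Continuous w)
    (hh : Continuous h) (u v : ℝ) :
    HasSum (fun k ↦ a k * ∫ t in u..v, w t * h t ^ k) (∫ t in u..v, w t * ∑' k, a k * h t ^ k) := by
  have h_norm : Continuous fun R : ℝ ↦ ∑' k, ‖a k‖ * R ^ k :=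
    continuous_tsum_mul_pow fun R ↦ by simpa using ha R
  have h_summable (t : ℝ) : Summable fun k ↦ a k * h t ^ k :=
    .of_norm (by simpa using ha ‖h t‖)
  simp_rw [← intervalIntegral.integral_const_mul]
  refine intervalIntegral.hasSum_integral_of_dominated_convergence
    (fun k t ↦ ‖w t‖ * (‖a k‖ * ‖h t‖ ^ k))
    (fun k ↦ Continuous.aestronglyMeasurable (by fun_prop))
    (fun k ↦ .of_forall fun t _ ↦ ?_) (.of_forall fun t _ ↦ (ha ‖h t‖).mul_left _) ?_
    (.of_forall fun t _ ↦ ?_)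
  · rw [norm_mul, norm_mul, norm_pow, mul_left_comm]
  · simp_rw [tsum_mul_left]
    exact (hw.norm.mul (h_norm.comp hh.norm)).intervalIntegrable _ _
  · simpa only [mul_left_comm] using (h_summable t).hasSum.mul_left (w t)

end EverywhereConvergentSeries

section BesselClifford

/-- The Bessel–Clifford function of order one, `𝒞₁(z) = ₀F₁(; 2; z)`, equal to `I₁(2√z) / √z` for
`z > 0`. The series over the number of claims before first passage sums to it. -/
noncomputable def besselClifford (z : ℝ) : ℝ :=
  ∑' k : ℕ, ((k ! : ℝ) * (k + 1)!)⁻¹ * z ^ k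

theorem summable_norm_inv_factorial_mul_pow (R : ℝ) :
    Summable fun k : ℕ ↦ ‖((k ! : ℝ) * (k + 1)!)⁻¹‖ * R ^ k := by
  refine .of_norm_bounded (Real.summable_pow_div_factorial |R|) fun k ↦ ?_
  rw [norm_mul, norm_norm, norm_pow, Real.norm_eq_abs R, div_eq_inv_mul,
    Real.norm_of_nonneg (by positivity)]
  have h_one : (1 : ℝ) ≤ (k + 1)! := mod_cast Nat.one_le_iff_ne_zero.2 (Nat.factorial_ne_zero _)
  gcongr
  exact le_mul_of_one_le_right (by positivity) h_one

@[fun_prop]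
theorem continuous_besselClifford : Continuous besselClifford :=
  continuous_tsum_mul_pow summable_norm_inv_factorial_mul_pow

theorem hasSum_besselClifford (z : ℝ) :
    HasSum (fun k : ℕ ↦ ((k ! : ℝ) * (k + 1)!)⁻¹ * z ^ k) (besselClifford z) :=
  (Summable.of_norm (by simpa using summable_norm_inv_factorial_mul_pow |z|)).hasSum

theorem hasSum_integral_mul_besselClifford {w h : ℝ → ℝ} (hw : Continuous w) (hh : Continuous h)
    (u v : ℝ) :
    HasSum (fun k : ℕ ↦ ((k ! : ℝ) * (k + 1)!)⁻¹ * ∫ t in u..v, w t * h t ^ k)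
      (∫ t in u..v, w t * besselClifford (h t)) :=
  hasSum_intervalIntegral_mul_pow summable_norm_inv_factorial_mul_pow hw hh u v

theorem integral_mul_sub_pow (a : ℝ) (k : ℕ) :
    ∫ y in (0 : ℝ)..a, y * (a - y) ^ k = a ^ (k + 2) / ((k + 1) * (k + 2)) := by
  calc ∫ y in (0 : ℝ)..a, y * (a - y) ^ k
      = ∫ u in (0 : ℝ)..a, (a - u) * u ^ k := by
        simpa using intervalIntegral.integral_comp_sub_left (a := 0) (b := a)
          (fun u : ℝ ↦ (a - u) * u ^ k) a
    _ = ∫ u in (0 : ℝ)..a, (a * u ^ k - u ^ (k + 1)) := by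
        congr! 2 with u
        ring
    _ = a * (a ^ (k + 1) / (k + 1)) - a ^ (k + 2) / (k + 2) := by
        rw [intervalIntegral.integral_sub
          (Continuous.intervalIntegrable (by fun_prop) _ _)
          (Continuous.intervalIntegrable (by fun_prop) _ _),
          intervalIntegral.integral_const_mul, integral_pow, integral_pow]
        push_cast
        ring
    _ = a ^ (k + 2) / ((k + 1) * (k + 2)) := by
        field_simp
        ring

theorem mul_integral_mul_besselClifford_sub (s a : ℝ) :
    s * ∫ y in (0 : ℝ)..a, y * besselClifford (s * (a - y)) = a * (besselClifford (s * a) - 1) := by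
  have h_beta : HasSum
      (fun k : ℕ ↦ s * (((k ! : ℝ) * (k + 1)!)⁻¹ * ∫ y in (0 : ℝ)..a, y * (s * (a - y)) ^ k))
      (s * ∫ y in (0 : ℝ)..a, y * besselClifford (s * (a - y))) :=
    (hasSum_integral_mul_besselClifford continuous_id (by fun_prop) 0 a).mul_left s
  have h_tail : HasSum
      (fun k : ℕ ↦ a * ((((k + 1)! : ℝ) * (k + 1 + 1)!)⁻¹ * (s * a) ^ (k + 1)))
      (a * (besselClifford (s * a) - 1)) := by
    simpa using ((hasSum_nat_add_iff' 1).2 (hasSum_besselClifford (s * a))).mul_left a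
  refine h_beta.unique (h_tail.congr_fun fun k ↦ ?_)
  simp_rw [mul_pow, mul_left_comm _ (s ^ k), intervalIntegral.integral_const_mul,
    integral_mul_sub_pow, Nat.factorial_succ]
  push_cast
  field_simp
  ring

theorem besselClifford_zero : besselClifford 0 = 1 := by
  have h_zero : 0 = besselClifford 0 - 1 := by simpa using mul_integral_mul_besselClifford_sub 0 1
  linarith

theorem mul_integral_mul_besselClifford_triangle (κ c t : ℝ) :
    κ * ∫ y in (0 : ℝ)..c * t, y * besselClifford (κ * t * (c * t - y))
      = c * (besselClifford (κ * t * (c * t)) - 1) := by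
  rcases eq_or_ne t 0 with rfl | ht
  · simp [besselClifford_zero]
  · apply mul_left_cancel₀ ht
    linear_combination mul_integral_mul_besselClifford_sub (κ * t) (c * t)

theorem mul_intervalIntegral_triangle_mul_besselClifford (w : ℝ → ℝ) (κ c u v : ℝ) :
    κ * ∫ t in u..v, ∫ y in (0 : ℝ)..c * t, w t * (y * besselClifford (κ * t * (c * t - y)))
      = c * ∫ t in u..v, w t * (besselClifford (κ * t * (c * t)) - 1) := by
  rw [← intervalIntegral.integral_const_mul, ← intervalIntegral.integral_const_mul]
  congr! 2 with t
  rw [intervalIntegral.integral_const_mul, mul_left_comm,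
    mul_integral_mul_besselClifford_triangle, mul_left_comm]

end BesselClifford

section Region

variable {E : Type*} [NormedAddCommGroup E]

theorem integrableOn_Ioi_ite_le {f : ℝ → E} {l m : ℝ} (hf : IntegrableOn f (Ioc l m)) :
    IntegrableOn (fun y ↦ if y ≤ m then f y else 0) (Ioi l) := by
  change IntegrableOn ((Iic m).indicator f) (Ioi l)
  rwa [IntegrableOn, integrable_indicator_iff measurableSet_Iic, IntegrableOn,
    Measure.restrict_restrict measurableSet_Iic, inter_comm, Ioi_inter_Iic]

theorem integrable_uncurry_ite_lt {f : ℝ → ℝ → E} (hf : Continuous (uncurry f)) {g : ℝ → ℝ}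
    (hg : Continuous g) (l a b : ℝ) :
    Integrable (uncurry fun y t ↦ if y < g t then f y t else 0)
      ((volume.restrict (Ioi l)).prod (volume.restrict (Ioc a b))) := by
  obtain ⟨M, hM⟩ := isCompact_Icc.bddAbove_image (hg.continuousOn (s := Icc a b))
  have h_meas : MeasurableSet {p : ℝ × ℝ | p.1 < g p.2} :=
    measurableSet_lt (by fun_prop) (by fun_prop)
  have h_rect : IntegrableOn (uncurry f) (Icc l M ×ˢ Icc a b) :=
    hf.continuousOn.integrableOn_compact (isCompact_Icc.prod isCompact_Icc)
  change Integrable ({p : ℝ × ℝ | p.1 < g p.2}.indicator (uncurry f)) _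
  rw [integrable_indicator_iff h_meas, Measure.prod_restrict, IntegrableOn,
    Measure.restrict_restrict h_meas]
  refine h_rect.mono_set ?_
  rintro ⟨y, t⟩ ⟨hyt : y < g t, hy, ht⟩
  have ht' : t ∈ Icc a b := Ioc_subset_Icc_self ht
  exact ⟨⟨hy.le, hyt.le.trans (hM (mem_image_of_mem g ht'))⟩, ht'⟩

variable [NormedSpace ℝ E]

theorem setIntegral_Ioi_ite_le (f : ℝ → E) {l m : ℝ} (hlm : l ≤ m) :
    ∫ y in Ioi l, (if y ≤ m then f y else 0) = ∫ y in l..m, f y := by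
  change ∫ y in Ioi l, (Iic m).indicator f y = _
  rw [setIntegral_indicator measurableSet_Iic, Ioi_inter_Iic, intervalIntegral.integral_of_le hlm]

theorem setIntegral_Ioi_ite_lt (f : ℝ → E) {l m : ℝ} (hlm : l ≤ m) :
    ∫ y in Ioi l, (if y < m then f y else 0) = ∫ y in l..m, f y := by
  change ∫ y in Ioi l, (Iio m).indicator f y = _
  rw [setIntegral_indicator measurableSet_Iio, Ioi_inter_Iio,
    intervalIntegral.integral_of_le hlm, integral_Ioc_eq_integral_Ioo]

theorem integrableOn_Ioi_intervalIntegral_ite_lt {f : ℝ → ℝ → E} (hf : Continuous (uncurry f))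
    {g : ℝ → ℝ} (hg : Continuous g) (l a b : ℝ) :
    IntegrableOn (fun y ↦ ∫ t in a..b, if y < g t then f y t else 0) (Ioi l) :=
  (integrable_uncurry_ite_lt hf hg l a b).integral_prod_left.sub
    (integrable_uncurry_ite_lt hf hg l b a).integral_prod_left

theorem setIntegral_Ioi_intervalIntegral_ite_lt {f : ℝ → ℝ → E} (hf : Continuous (uncurry f))
    {g : ℝ → ℝ} (hg : Continuous g) {l a b : ℝ} (hab : a ≤ b) (hlg : ∀ t ∈ Ioc a b, l ≤ g t) :
    ∫ y in Ioi l, ∫ t in a..b, (if y < g t then f y t else 0)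
      = ∫ t in a..b, ∫ y in l..g t, f y t := by
  simp_rw [intervalIntegral.integral_of_le hab]
  rw [integral_integral_swap (integrable_uncurry_ite_lt hf hg l a b)]
  exact setIntegral_congr_fun measurableSet_Ioc fun t ht ↦
    setIntegral_Ioi_ite_lt (fun y ↦ f y t) (hlg t ht)

end Region

section ExponentialClaims

/-- The joint law of first passage over `y` at time `t` after at least one claim, weighted by `r` to
the number of claims and discounted at rate `q`, has density `κ e^{μ y} passageKernel ρ κ c y t` on
`y < c t`, where `κ = r λ μ` and `ρ = λ + q + μ c`. Leaving out the cut-off `y < c t` keeps it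
continuous. -/
noncomputable def passageKernel (ρ κ c y t : ℝ) : ℝ :=
  Real.exp (-ρ * t) * (y * besselClifford (κ * t * (c * t - y)))

theorem continuous_uncurry_passageKernel (ρ κ c : ℝ) :
    Continuous (uncurry (passageKernel ρ κ c)) := by
  unfold passageKernel
  fun_prop

variable (μ lam c q r d x : ℝ)

theorem exp_mul_tsum_claims_eq_passageKernel (t y : ℝ) :
    Real.exp (-q * t) *
        ∑' k : ℕ, r ^ (k + 1) * lam ^ (k + 1) * μ ^ (k + 1) * y / (((k + 1)! : ℝ) * (k ! : ℝ))
          * t ^ k * (c * t - y) ^ k * (if y < c * t then 1 else 0)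
          * Real.exp (-(lam + μ * c) * t) * Real.exp (μ * y)
      = Real.exp (μ * y) * (r * lam * μ) *
          if y < c * t then passageKernel (lam + q + μ * c) (r * lam * μ) c y t else 0 := by
  have h_exp : Real.exp (-(lam + q + μ * c) * t)
      = Real.exp (-q * t) * Real.exp (-(lam + μ * c) * t) := by
    rw [← Real.exp_add]
    ring_nf
  split_ifs
  · simp_rw [passageKernel, besselClifford, h_exp, ← tsum_mul_left]
    congr! 2 with k
    simp only [mul_pow, pow_succ, div_eq_mul_inv, mul_inv]
    ring
  · simp

theorem wd_integrand_eq (y : ℝ) :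
    μ * Real.exp (-μ * (y + x)) *
        ((if y ≤ c * d then Real.exp (-(lam + q) * y / c) else 0)
          + ∫ t in (0 : ℝ)..d, Real.exp (-q * t) *
              ∑' k : ℕ,
                r ^ (k + 1) * lam ^ (k + 1) * μ ^ (k + 1) * y / (((k + 1)! : ℝ) * (k ! : ℝ))
                  * t ^ k * (c * t - y) ^ k * (if y < c * t then 1 else 0)
                  * Real.exp (-(lam + μ * c) * t) * Real.exp (μ * y))
      = Real.exp (-μ * x) * μ *
          ((if y ≤ c * d then Real.exp (-μ * y) * Real.exp (-(lam + q) * y / c) else 0)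
            + r * lam * μ * ∫ t in (0 : ℝ)..d,
              if y < c * t then passageKernel (lam + q + μ * c) (r * lam * μ) c y t else 0) := by
  have h_exp : Real.exp (-μ * (y + x)) = Real.exp (-μ * x) * Real.exp (-μ * y) := by
    rw [← Real.exp_add]
    ring_nf
  have h_cancel : Real.exp (-μ * y) * Real.exp (μ * y) = 1 := by
    rw [← Real.exp_add]
    simp
  simp_rw [exp_mul_tsum_claims_eq_passageKernel, intervalIntegral.integral_const_mul]
  rw [← mul_ite_zero, h_exp]
  set J := ∫ t in (0 : ℝ)..d,
    if y < c * t then passageKernel (lam + q + μ * c) (r * lam * μ) c y t else 0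
  linear_combination Real.exp (-μ * x) * μ * (r * lam * μ) * J * h_cancel

variable {c}

theorem integral_exp_mul_exp_div (hc : c ≠ 0) :
    ∫ y in (0 : ℝ)..c * d, Real.exp (-μ * y) * Real.exp (-(lam + q) * y / c)
      = c * ∫ t in (0 : ℝ)..d, Real.exp (-(lam + q + μ * c) * t) := by
  calc ∫ y in (0 : ℝ)..c * d, Real.exp (-μ * y) * Real.exp (-(lam + q) * y / c)
      = c * ∫ t in (0 : ℝ)..d, Real.exp (-μ * (c * t)) * Real.exp (-(lam + q) * (c * t) / c) := by
        simpa using (intervalIntegral.mul_integral_comp_mul_left (a := 0) (b := d) (c := c)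
          (f := fun y ↦ Real.exp (-μ * y) * Real.exp (-(lam + q) * y / c))).symm
    _ = c * ∫ t in (0 : ℝ)..d, Real.exp (-(lam + q + μ * c) * t) := by
        congr! 3 with t
        rw [← Real.exp_add]
        congr 1
        field_simp
        ring

variable {d}

theorem setIntegral_passageKernel_eq (hc : 0 < c) (hd : 0 ≤ d) :
    ∫ y in Ioi (0 : ℝ),
        ((if y ≤ c * d then Real.exp (-μ * y) * Real.exp (-(lam + q) * y / c) else 0)
          + r * lam * μ * ∫ t in (0 : ℝ)..d,
              if y < c * t then passageKernel (lam + q + μ * c) (r * lam * μ) c y t else 0)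
      = c * ∫ t in (0 : ℝ)..d,
          Real.exp (-(lam + q + μ * c) * t) * besselClifford (r * lam * μ * t * (c * t)) := by
  have hf := continuous_uncurry_passageKernel (lam + q + μ * c) (r * lam * μ) c
  have hg : Continuous fun t ↦ c * t := by fun_prop
  have h_noClaim : IntegrableOn (fun y ↦ if y ≤ c * d then
      Real.exp (-μ * y) * Real.exp (-(lam + q) * y / c) else 0) (Ioi 0) :=
    integrableOn_Ioi_ite_le (Continuous.integrableOn_Ioc (by fun_prop))
  have h_claims := (integrableOn_Ioi_intervalIntegral_ite_lt hf hg 0 0 d).const_mul (r * lam * μ)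
  calc _ = c * (∫ t in (0 : ℝ)..d, Real.exp (-(lam + q + μ * c) * t))
        + r * lam * μ * ∫ t in (0 : ℝ)..d, ∫ y in (0 : ℝ)..c * t,
            passageKernel (lam + q + μ * c) (r * lam * μ) c y t := by
        rw [integral_add h_noClaim h_claims, setIntegral_Ioi_ite_le _ (by positivity),
          integral_exp_mul_exp_div _ _ _ _ hc.ne', integral_const_mul,
          setIntegral_Ioi_intervalIntegral_ite_lt hf hg hd fun t ht ↦ mul_nonneg hc.le ht.1.le]
    _ = c * (∫ t in (0 : ℝ)..d, Real.exp (-(lam + q + μ * c) * t))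
        + c * ∫ t in (0 : ℝ)..d, Real.exp (-(lam + q + μ * c) * t) *
            (besselClifford (r * lam * μ * t * (c * t)) - 1) := by
        simp only [passageKernel]
        rw [mul_intervalIntegral_triangle_mul_besselClifford]
    _ = _ := by
        rw [← mul_add, ← intervalIntegral.integral_add
          (Continuous.intervalIntegrable (by fun_prop) _ _)
          (Continuous.intervalIntegrable (by fun_prop) _ _)]
        congr! 3 with t
        ring

theorem wd_exponential_claims_general (hc : 0 < c) (hd : 0 ≤ d) :
    (∫ y in Set.Ioi (0 : ℝ), μ * Real.exp (-μ * (y + x)) *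
        ((if y ≤ c * d then Real.exp (-(lam + q) * y / c) else 0)
          + ∫ t in (0 : ℝ)..d, Real.exp (-q * t) *
              ∑' k : ℕ,
                r ^ (k + 1) * lam ^ (k + 1) * μ ^ (k + 1) * y / (((k + 1)! : ℝ) * (k ! : ℝ))
                  * t ^ k * (c * t - y) ^ k * (if y < c * t then 1 else 0)
                  * Real.exp (-(lam + μ * c) * t) * Real.exp (μ * y)))
      = Real.exp (-μ * x) *
          ∑' k : ℕ, r ^ k * lam ^ k * (μ * c) ^ (k + 1) / ((k ! : ℝ) * ((k + 1)! : ℝ))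
            * ∫ t in (0 : ℝ)..d, t ^ (2 * k) * Real.exp (-(lam + q + μ * c) * t) := by
  have h_series := hasSum_integral_mul_besselClifford
    (w := fun t ↦ Real.exp (-(lam + q + μ * c) * t)) (h := fun t ↦ r * lam * μ * t * (c * t))
    (by fun_prop) (by fun_prop) 0 d
  simp_rw [wd_integrand_eq]
  rw [integral_const_mul, setIntegral_passageKernel_eq μ lam q r hc hd,
    ← h_series.tsum_eq, mul_assoc, ← mul_assoc μ c, ← tsum_mul_left (a := μ * c)]
  congr! 3 with k
  simp_rw [← intervalIntegral.integral_const_mul]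
  congr! 2 with t
  simp only [mul_pow, pow_succ, pow_mul']
  ring

end ExponentialClaims

/-- Closed-form evaluation of
`w_d(x) = ∫_0^∞ [∫_0^d e^{-qt} Σ_{k≥0} r^k v_y(k,t) dt] f(y+x) dy` in the
exponential-claim case `f(x) = μ e^{-μ x}`: it equals `e^{-μ x} u(d)` with
`u(d) = Σ_{k≥0} r^k λ^k (μ c)^{k+1} / (k!(k+1)!) ∫_0^d t^{2k} e^{-(λ+q+μc)t} dt`. -/
theorem wd_exponential_claims
    (μ lam c q r d : ℝ) (hμ : 0 < μ) (hlam : 0 < lam) (hc : 0 < c) (hq : 0 < q)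
    (hr : r ∈ Set.Ioc (0 : ℝ) 1) (hd : 0 < d) (x : ℝ) :
    (∫ y in Set.Ioi (0 : ℝ), μ * Real.exp (-μ * (y + x)) *
        ((if y ≤ c * d then Real.exp (-(lam + q) * y / c) else 0)
          + ∫ t in (0 : ℝ)..d, Real.exp (-q * t) *
              ∑' k : ℕ,
                r ^ (k + 1) * lam ^ (k + 1) * μ ^ (k + 1) * y /
                    ((Nat.factorial (k + 1) : ℝ) * (Nat.factorial k : ℝ))
                  * t ^ k * (c * t - y) ^ k * (if y < c * t then 1 else 0)
                  * Real.exp (-(lam + μ * c) * t) * Real.exp (μ * y)))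
      = Real.exp (-μ * x) *
          ∑' k : ℕ,
            r ^ k * lam ^ k * (μ * c) ^ (k + 1) /
                ((Nat.factorial k : ℝ) * (Nat.factorial (k + 1) : ℝ))
              * ∫ t in (0 : ℝ)..d, t ^ (2 * k) * Real.exp (-(lam + q + μ * c) * t) :=
  wd_exponential_claims_general μ lam q r x hc hd.le
end
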